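/- arXiv:2005.01032 — 2 statements merged into one kernel-verified Lean document; each statement's English description precedes it below -/
import Mathlib

section
/- There exist constants C > 0 such that the following holds: if q(0) ∈ l^∞(ℤ), p(0) = 0, and q(t) is the solution of q̈_k = ω₁²(q_{k+1} - 2q_k + q_{k-1}), then for all t ≥ 0, ‖q(t)‖_∞ ≤ (√(2γω₁ t) + 2)‖q(0)‖_∞, where γ is the unique positive root of (1/γ)e^{1/γ} = 1/e. -/
/-- The operator `(Vq)_k = -ω₁²(q_{k+1} - 2q_k + q_{k-1})` acting on sequences. -/
noncomputable def Vop (ω₁ : ℝ) (q : ℤ → ℝ) : ℤ → ℝ :=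
  fun k => -ω₁^2 * (q (k+1) - 2 * q k + q (k-1))

/-!
The data are split at distance `γ ω₁ t` from the site `n`. On the Fourier side `V` is multiplication
by `λ²` with `λ` real, so `C(t)` is multiplication by `cos (tλ)` and is bounded from `ℓ²` to `ℓ^∞`
with norm at most `1`; the near part, with its `2N + 1` sites, `N = ⌊γ ω₁ t⌋`, therefore contributes
at most `√(2N + 1) ‖q(0)‖_∞`. As `Vᵏ` has range `k`, only the terms with `k > N` of the series of
`C(t)` see the far part, and they add up to at most `(e^{α + 1} α)^{2(N + 1)} ‖q(0)‖_∞` with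
`α = ω₁ t / (N + 1)`. Since `α ≤ 1 / γ`, the choice of `γ` makes this at most `‖q(0)‖_∞`.
-/

open MeasureTheory AddCircle
open scoped Nat

namespace HarmonicChain

lemma integral_norm_le_norm_Lp {X E : Type*} [MeasurableSpace X] [NormedAddCommGroup E]
    {μ : Measure X} [IsProbabilityMeasure μ] {p : ENNReal} [hp : Fact (1 ≤ p)] (f : Lp E p μ) :
    ∫ x, ‖f x‖ ∂μ ≤ ‖f‖ := by
  have hf := Lp.aestronglyMeasurable f
  rw [integral_norm_eq_lintegral_enorm hf, ← eLpNorm_one_eq_lintegral_enorm, Lp.norm_def]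
  exact ENNReal.toReal_mono (Lp.eLpNorm_ne_top f) (eLpNorm_le_eLpNorm_of_exponent_le hp.out hf)

lemma integrable_ofReal_mul {X : Type*} [TopologicalSpace X] [CompactSpace X] [MeasurableSpace X]
    [OpensMeasurableSpace X] {μ : Measure X} (w : C(X, ℝ)) {g : X → ℂ} (hg : Integrable g μ) :
    Integrable (fun x => (w x : ℂ) * g x) μ :=
  hg.bdd_mul (c := ‖w‖) (by fun_prop) <| .of_forall fun x => by
    simpa using w.norm_coe_le_norm x

section Fourier

variable {T : ℝ} [Fact (0 < T)]

lemma norm_fourierCoeff_le {E : Type*} [NormedAddCommGroup E] [NormedSpace ℂ E]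
    (f : AddCircle T → E) (n : ℤ) : ‖fourierCoeff f n‖ ≤ ∫ x, ‖f x‖ ∂haarAddCircle := by
  refine (norm_integral_le_integral_norm _).trans_eq ?_
  simp only [norm_smul, fourier_apply, Circle.norm_coe, one_mul]

lemma fourierCoeff_fourier_smul {E : Type*} [NormedAddCommGroup E] [NormedSpace ℂ E]
    (f : AddCircle T → E) (m n : ℤ) :
    fourierCoeff (fun x => fourier m x • f x) n = fourierCoeff f (n - m) := by
  simp only [fourierCoeff, smul_smul, ← fourier_add, sub_eq_neg_add, neg_add_rev, neg_neg]

lemma exists_Lp_fourierCoeff_eq {c : ℤ → ℂ} (hc : Summable fun n => ‖c n‖ ^ 2) :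
    ∃ g : Lp ℂ 2 (haarAddCircle (T := T)),
      fourierCoeff g = c ∧ ‖g‖ = √(∑' n, ‖c n‖ ^ 2) := by
  have h2 : 0 < (2 : ENNReal).toReal := by norm_num
  have hmem : Memℓp c 2 := (memℓp_gen_iff h2).2 (by simpa using hc)
  let a : lp (fun _ : ℤ => ℂ) 2 := ⟨c, hmem⟩
  refine ⟨fourierBasis.repr.symm a, ?_, ?_⟩
  · funext n
    rw [← fourierBasis_repr, LinearIsometryEquiv.apply_symm_apply]
  · have ha : ‖a‖ ^ 2 = ∑' n, ‖c n‖ ^ 2 := by simpa using lp.norm_rpow_eq_tsum h2 a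
    rw [LinearIsometryEquiv.norm_map, ← ha, Real.sqrt_sq (norm_nonneg a)]

lemma hasSum_fourierCoeff_cos_mul (w : C(AddCircle T, ℝ)) {g : AddCircle T → ℂ}
    (hg : Integrable g haarAddCircle) (n : ℤ) :
    HasSum (fun k : ℕ => (-1) ^ k / ((2 * k)! : ℂ) *
        fourierCoeff (fun x => (w x : ℂ) ^ (2 * k) * g x) n)
      (fourierCoeff (fun x => (Real.cos (w x) : ℂ) * g x) n) := by
  simp only [← fourierCoeff.const_mul]
  refine hasSum_integral_of_dominated_convergence
    (fun k x => ‖w‖ ^ (2 * k) / ((2 * k)! : ℝ) * ‖g x‖) (fun k => ?_)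
    (fun k => .of_forall fun x => ?_)
    (.of_forall fun x => (Real.hasSum_cosh ‖w‖).summable.mul_right _) ?_ (.of_forall fun x => ?_)
  · have := hg.aestronglyMeasurable
    fun_prop
  · simp only [norm_smul, norm_mul, norm_div, norm_pow, norm_neg, norm_one, one_pow, one_mul,
      fourier_apply, Circle.norm_coe, RCLike.norm_natCast, Complex.norm_real]
    rw [← mul_assoc, div_mul_eq_mul_div, one_mul]
    gcongr
    exact w.norm_coe_le_norm x
  · simp_rw [tsum_mul_right]
    exact hg.norm.const_mul _
  · have hcos := (Complex.hasSum_ofReal.2 (Real.hasSum_cos (w x))).mul_right (g x)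
    refine (hcos.congr_fun fun k => ?_).const_smul _
    push_cast
    ring

end Fourier

lemma Vop_add (ω : ℝ) (f g : ℤ → ℝ) : Vop ω (f + g) = Vop ω f + Vop ω g := by
  funext n
  simp only [Vop, Pi.add_apply]
  ring

lemma Vop_iterate_add (ω : ℝ) (f g : ℤ → ℝ) (k : ℕ) :
    (Vop ω)^[k] (f + g) = (Vop ω)^[k] f + (Vop ω)^[k] g :=
  iterate_map_add (AddMonoidHom.mk' (Vop ω) (Vop_add ω)) k f g

lemma abs_Vop_iterate_le (ω : ℝ) {f : ℤ → ℝ} {B : ℝ} (hB : ∀ n, |f n| ≤ B) (k : ℕ) (n : ℤ) :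
    |(Vop ω)^[k] f n| ≤ (2 * ω) ^ (2 * k) * B := by
  induction k generalizing n with
  | zero => simpa using hB n
  | succ k ih =>
    rw [Function.iterate_succ_apply']
    set g := (Vop ω)^[k] f
    have hdiff : |g (n + 1) - 2 * g n + g (n - 1)| ≤ 4 * ((2 * ω) ^ (2 * k) * B) := by
      have hright := abs_le.1 (ih (n + 1))
      have hmid := abs_le.1 (ih n)
      have hleft := abs_le.1 (ih (n - 1))
      exact abs_le.2 ⟨by linarith, by linarith⟩
    calc |Vop ω g n| = ω ^ 2 * |g (n + 1) - 2 * g n + g (n - 1)| := by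
          rw [Vop, abs_mul, abs_neg, abs_of_nonneg (sq_nonneg ω)]
      _ ≤ ω ^ 2 * (4 * ((2 * ω) ^ (2 * k) * B)) := by gcongr
      _ = (2 * ω) ^ (2 * (k + 1)) * B := by ring

lemma Vop_iterate_eq_zero (ω : ℝ) {f : ℤ → ℝ} {k : ℕ} {n : ℤ}
    (hf : ∀ m, |m - n| ≤ k → f m = 0) : (Vop ω)^[k] f n = 0 := by
  induction k generalizing n with
  | zero => exact hf n (by simp)
  | succ k ih =>
    have hnear (j : ℤ) (hj : |j - n| ≤ 1) : (Vop ω)^[k] f j = 0 :=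
      ih fun m hm => hf m <| by
        have := abs_sub_le m j n
        push_cast
        linarith
    rw [Function.iterate_succ_apply', Vop, hnear n (by simp), hnear (n + 1) (by simp),
      hnear (n - 1) (by simp)]
    ring

/-- The `k`-th term of the series of `propagator ω t f n`. -/
noncomputable def propagatorTerm (ω t : ℝ) (f : ℤ → ℝ) (n : ℤ) (k : ℕ) : ℝ :=
  (-1) ^ k * t ^ (2 * k) / (2 * k)! * (Vop ω)^[k] f n

/-- The solution operator `C(t) = ∑ (-1)ᵏ t²ᵏ Vᵏ / (2k)!` of the chain started at rest; for
unbounded `f` the series may diverge, in which case its value is `0`. -/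
noncomputable def propagator (ω t : ℝ) (f : ℤ → ℝ) (n : ℤ) : ℝ :=
  ∑' k, propagatorTerm ω t f n k

lemma abs_propagatorTerm_le (ω t : ℝ) {f : ℤ → ℝ} {B : ℝ} (hB : ∀ n, |f n| ≤ B) (n : ℤ) (k : ℕ) :
    |propagatorTerm ω t f n k| ≤ (2 * (ω * t)) ^ (2 * k) / (2 * k)! * B := by
  have heven : 0 ≤ t ^ (2 * k) := (even_two_mul k).pow_nonneg t
  calc |propagatorTerm ω t f n k| = t ^ (2 * k) / (2 * k)! * |(Vop ω)^[k] f n| := by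
        rw [propagatorTerm, abs_mul, abs_div, abs_mul, abs_neg_one_pow, one_mul, Nat.abs_cast,
          abs_of_nonneg heven]
    _ ≤ t ^ (2 * k) / (2 * k)! * ((2 * ω) ^ (2 * k) * B) := by
        gcongr
        exact abs_Vop_iterate_le ω hB k n
    _ = (2 * (ω * t)) ^ (2 * k) / (2 * k)! * B := by rw [← mul_assoc 2, mul_pow _ t]; ring

lemma summable_propagatorTerm (ω t : ℝ) {f : ℤ → ℝ} {B : ℝ} (hB : ∀ n, |f n| ≤ B) (n : ℤ) :
    Summable (propagatorTerm ω t f n) :=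
  .of_norm_bounded ((Real.hasSum_cosh (2 * (ω * t))).summable.mul_right B)
    (abs_propagatorTerm_le ω t hB n)

lemma propagator_add (ω t : ℝ) {f g : ℤ → ℝ} {B B' : ℝ} (hf : ∀ n, |f n| ≤ B)
    (hg : ∀ n, |g n| ≤ B') : propagator ω t (f + g) = propagator ω t f + propagator ω t g := by
  funext n
  rw [Pi.add_apply, propagator, propagator, propagator,
    ← (summable_propagatorTerm ω t hf n).tsum_add (summable_propagatorTerm ω t hg n)]
  simp only [propagatorTerm, Vop_iterate_add, Pi.add_apply, mul_add]

section Near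

/-- The dispersion relation `λ(x) = ω |1 - exp(2πix)|` of the chain, at wave number `2πx`:
on the Fourier side `Vop ω` is multiplication by `λ²`. -/
noncomputable def dispersion (ω : ℝ) : C(UnitAddCircle, ℝ) where
  toFun x := ω * ‖1 - fourier 1 x‖

lemma ofReal_dispersion_sq (ω : ℝ) (x : UnitAddCircle) :
    (dispersion ω x : ℂ) ^ 2 = ω ^ 2 * (2 - fourier (-1) x - fourier 1 x) := by
  have hinv : fourier 1 x * fourier (-1) x = 1 := by
    rw [← fourier_add, add_neg_cancel, fourier_zero]
  have hnorm : (‖1 - fourier 1 x‖ : ℂ) ^ 2 = (1 - fourier 1 x) * (1 - fourier (-1) x) := by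
    rw [← Complex.mul_conj', map_sub, map_one, ← fourier_neg]
  simp only [dispersion, ContinuousMap.coe_mk, Complex.ofReal_mul, mul_pow, hnorm]
  linear_combination (ω : ℂ) ^ 2 * hinv

variable (ω t : ℝ) {f : ℤ → ℝ} {g : UnitAddCircle → ℂ}

lemma ofReal_Vop_eq_fourierCoeff (hg : Integrable g haarAddCircle)
    (hfg : ∀ n, (f n : ℂ) = fourierCoeff g n) (n : ℤ) :
    (Vop ω f n : ℂ) = fourierCoeff (fun x => (dispersion ω x : ℂ) ^ 2 * g x) n := by
  have hsplit : (fun x => (dispersion ω x : ℂ) ^ 2 * g x) =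
      ((ω : ℂ) ^ 2) • ((2 : ℂ) • g + (-1 : ℂ) • ((fun x => fourier (-1) x • g x) +
        fun x => fourier 1 x • g x)) := by
    funext x
    simp only [ofReal_dispersion_sq, Pi.smul_apply, Pi.add_apply, smul_eq_mul]
    ring
  have hshift := (hg.fourier_smul (-1)).add (hg.fourier_smul 1)
  rw [hsplit, fourierCoeff.const_smul, fourierCoeff.add (hg.smul _) (hshift.smul _), Pi.add_apply,
    fourierCoeff.const_smul, fourierCoeff.const_smul,
    fourierCoeff.add (hg.fourier_smul _) (hg.fourier_smul _), Pi.add_apply,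
    fourierCoeff_fourier_smul, fourierCoeff_fourier_smul, sub_neg_eq_add, ← hfg, ← hfg, ← hfg, Vop]
  push_cast [smul_eq_mul]
  ring

lemma ofReal_Vop_iterate_eq_fourierCoeff (hg : Integrable g haarAddCircle)
    (hfg : ∀ n, (f n : ℂ) = fourierCoeff g n) (k : ℕ) (n : ℤ) :
    ((Vop ω)^[k] f n : ℂ) = fourierCoeff (fun x => (dispersion ω x : ℂ) ^ (2 * k) * g x) n := by
  induction k generalizing n with
  | zero => simpa using hfg n
  | succ k ih =>
    have hint : Integrable (fun x => (dispersion ω x : ℂ) ^ (2 * k) * g x) haarAddCircle := by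
      simpa using integrable_ofReal_mul (dispersion ω ^ (2 * k)) hg
    rw [Function.iterate_succ_apply', ofReal_Vop_eq_fourierCoeff ω hint ih]
    simp only [← mul_assoc, ← pow_add, mul_add, mul_one, add_comm]

lemma hasSum_propagatorTerm_fourierCoeff (hg : Integrable g haarAddCircle)
    (hfg : ∀ n, (f n : ℂ) = fourierCoeff g n) (n : ℤ) :
    HasSum (fun k => (propagatorTerm ω t f n k : ℂ))
      (fourierCoeff (fun x => (Real.cos (t * dispersion ω x) : ℂ) * g x) n) := by
  refine (hasSum_fourierCoeff_cos_mul (t • dispersion ω) hg n).congr_fun fun k => ?_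
  rw [propagatorTerm, Complex.ofReal_mul, ofReal_Vop_iterate_eq_fourierCoeff ω hg hfg]
  simp only [ContinuousMap.smul_apply, smul_eq_mul, Complex.ofReal_mul, mul_pow, mul_assoc,
    fourierCoeff.const_mul]
  push_cast
  ring

lemma abs_propagator_le_sqrt_tsum_sq (hf : Summable fun n => f n ^ 2) (n : ℤ) :
    |propagator ω t f n| ≤ √(∑' m, f m ^ 2) := by
  obtain ⟨g, hgf, hnorm⟩ : ∃ g : Lp ℂ 2 (haarAddCircle (T := 1)),
      fourierCoeff g = (fun m => (f m : ℂ)) ∧ ‖g‖ = √(∑' m, f m ^ 2) := by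
    simpa using exists_Lp_fourierCoeff_eq (T := 1) (c := fun m => (f m : ℂ)) (by simpa using hf)
  have hg : Integrable g haarAddCircle := (Lp.memLp g).integrable (by norm_num)
  have hsum := hasSum_propagatorTerm_fourierCoeff ω t hg (fun m => (congrFun hgf m).symm) n
  calc |propagator ω t f n|
      = ‖fourierCoeff (fun x => (Real.cos (t * dispersion ω x) : ℂ) * g x) n‖ := by
        rw [← hsum.tsum_eq, ← Complex.ofReal_tsum, Complex.norm_real, Real.norm_eq_abs, propagator]
    _ ≤ ∫ x, ‖(Real.cos (t * dispersion ω x) : ℂ) * g x‖ ∂haarAddCircle := norm_fourierCoeff_le _ n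
    _ ≤ ∫ x, ‖g x‖ ∂haarAddCircle := by
        refine integral_mono_of_nonneg (.of_forall fun x => norm_nonneg _) hg.norm
          (.of_forall fun x => ?_)
        simp only [norm_mul, Complex.norm_real]
        exact mul_le_of_le_one_left (norm_nonneg _) (Real.abs_cos_le_one _)
    _ ≤ ‖g‖ := integral_norm_le_norm_Lp g
    _ = √(∑' m, f m ^ 2) := hnorm

lemma abs_propagator_le_sqrt_card_mul {B : ℝ} (hB : ∀ m, |f m| ≤ B) {S : Finset ℤ}
    (hS : ∀ m ∉ S, f m = 0) (n : ℤ) : |propagator ω t f n| ≤ √S.card * B := by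
  have hB0 : 0 ≤ B := (abs_nonneg _).trans (hB 0)
  have hzero : ∀ m ∉ S, f m ^ 2 = 0 := fun m hm => by rw [hS m hm, sq, zero_mul]
  calc |propagator ω t f n| ≤ √(∑' m, f m ^ 2) :=
        abs_propagator_le_sqrt_tsum_sq ω t (summable_of_ne_finset_zero hzero) n
    _ = √(∑ m ∈ S, f m ^ 2) := by rw [tsum_eq_sum hzero]
    _ ≤ √(S.card * B ^ 2) := by
        gcongr
        rw [← nsmul_eq_mul]
        exact Finset.sum_le_card_nsmul _ _ _ fun m _ => sq_le_sq.2 ((hB m).trans (le_abs_self B))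
    _ = √S.card * B := by rw [Real.sqrt_mul (Nat.cast_nonneg _), Real.sqrt_sq hB0]

end Near

lemma pow_add_div_factorial_le {x : ℝ} (hx : 0 ≤ x) (m n : ℕ) :
    x ^ (m + n) / (m + n)! ≤ x ^ m / m ! * (x ^ n / n !) := by
  have hfac : (m ! * n ! : ℝ) ≤ (m + n)! := by
    exact_mod_cast Nat.le_of_dvd (Nat.factorial_pos _)
      (Nat.factorial_mul_factorial_dvd_factorial_add m n)
  rw [div_mul_div_comm, ← pow_add]
  gcongr

lemma pow_div_factorial_le_exp_mul_div_pow {x : ℝ} (hx : 0 ≤ x) (n : ℕ) :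
    x ^ n / n ! ≤ (Real.exp 1 * (x / n)) ^ n := by
  rcases n.eq_zero_or_pos with rfl | hn
  · simp
  calc x ^ n / n ! = (n : ℝ) ^ n / n ! * (x / n) ^ n := by
        rw [div_mul_eq_mul_div, ← mul_pow, mul_div_cancel₀ _ (by positivity)]
    _ ≤ Real.exp n * (x / n) ^ n := by
        gcongr
        exact Real.pow_div_factorial_le_exp _ n.cast_nonneg _
    _ = (Real.exp 1 * (x / n)) ^ n := by rw [mul_pow, Real.exp_one_pow]

lemma cosh_le_exp_abs (x : ℝ) : Real.cosh x ≤ Real.exp |x| := by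
  rw [← Real.cosh_abs, ← Real.cosh_add_sinh |x|]
  exact le_add_of_nonneg_right (Real.sinh_nonneg_iff.2 (abs_nonneg x))

lemma abs_propagator_le_pow_div_factorial_mul (ω t : ℝ) {f : ℤ → ℝ} {B : ℝ}
    (hB : ∀ m, |f m| ≤ B) {n : ℤ} {M : ℕ} (hf : ∀ m, |m - n| < M → f m = 0) :
    |propagator ω t f n| ≤
      |2 * (ω * t)| ^ (2 * M) / (2 * M)! * Real.exp |2 * (ω * t)| * B := by
  have hB0 : 0 ≤ B := (abs_nonneg _).trans (hB 0)
  set s := 2 * (ω * t)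
  have hhead : ∑ k ∈ Finset.range M, propagatorTerm ω t f n k = 0 :=
    Finset.sum_eq_zero fun k hk => by
      have := Finset.mem_range.1 hk
      rw [propagatorTerm, Vop_iterate_eq_zero ω fun m hm => hf m (by omega), mul_zero]
  have hterm (k : ℕ) : ‖propagatorTerm ω t f n (k + M)‖ ≤
      |s| ^ (2 * M) / (2 * M)! * B * (|s| ^ (2 * k) / (2 * k)!) := by
    calc ‖propagatorTerm ω t f n (k + M)‖ ≤ s ^ (2 * (k + M)) / (2 * (k + M))! * B :=
          abs_propagatorTerm_le ω t hB n (k + M)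
      _ = |s| ^ (2 * M + 2 * k) / (2 * M + 2 * k)! * B := by
          rw [← (even_two_mul (k + M)).pow_abs, mul_add, add_comm]
      _ ≤ |s| ^ (2 * M) / (2 * M)! * (|s| ^ (2 * k) / (2 * k)!) * B := by
          gcongr
          exact pow_add_div_factorial_le (abs_nonneg s) _ _
      _ = |s| ^ (2 * M) / (2 * M)! * B * (|s| ^ (2 * k) / (2 * k)!) := by ring
  calc |propagator ω t f n| = ‖∑' k, propagatorTerm ω t f n (k + M)‖ := by
        rw [propagator, ← (summable_propagatorTerm ω t hB n).sum_add_tsum_nat_add M, hhead,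
          zero_add, Real.norm_eq_abs]
    _ ≤ |s| ^ (2 * M) / (2 * M)! * B * Real.cosh |s| :=
        tsum_of_norm_bounded ((Real.hasSum_cosh |s|).mul_left _) hterm
    _ ≤ |s| ^ (2 * M) / (2 * M)! * B * Real.exp |s| := by
        gcongr
        rw [Real.cosh_abs]
        exact cosh_le_exp_abs s
    _ = |s| ^ (2 * M) / (2 * M)! * Real.exp |s| * B := by ring

lemma abs_propagator_le_exp_mul_pow (ω t : ℝ) {f : ℤ → ℝ} {B : ℝ} (hB : ∀ m, |f m| ≤ B) {n : ℤ}
    {M : ℕ} (hM : M ≠ 0) (hf : ∀ m, |m - n| < M → f m = 0) :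
    |propagator ω t f n| ≤
      (Real.exp (|ω * t| / M + 1) * (|ω * t| / M)) ^ (2 * M) * B := by
  have hB0 : 0 ≤ B := (abs_nonneg _).trans (hB 0)
  have hs : |2 * (ω * t)| = 2 * |ω * t| := by rw [abs_mul, abs_two]
  refine (abs_propagator_le_pow_div_factorial_mul ω t hB hf).trans ?_
  gcongr
  set s := |ω * t|
  have hexp : Real.exp (2 * s) = Real.exp (s / M) ^ (2 * M) := by
    rw [← Real.exp_nat_mul]
    congr 1
    push_cast
    field_simp
  have hpow : (2 * s) ^ (2 * M) / (2 * M)! ≤ (Real.exp 1 * (s / M)) ^ (2 * M) := by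
    refine (pow_div_factorial_le_exp_mul_div_pow (by positivity) _).trans_eq ?_
    rw [Nat.cast_mul, Nat.cast_two, mul_div_mul_left _ _ two_ne_zero]
  calc |2 * (ω * t)| ^ (2 * M) / (2 * M)! * Real.exp |2 * (ω * t)|
      ≤ (Real.exp 1 * (s / M)) ^ (2 * M) * Real.exp (s / M) ^ (2 * M) := by
        rw [hs, hexp]
        gcongr
    _ = (Real.exp (s / M + 1) * (s / M)) ^ (2 * M) := by
        rw [← mul_pow, Real.exp_add]
        ring

lemma abs_propagator_le (ω t : ℝ) {f : ℤ → ℝ} {B : ℝ} (hB : ∀ m, |f m| ≤ B) (n : ℤ) (N : ℕ) :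
    |propagator ω t f n| ≤ (√(2 * N + 1) +
      (Real.exp (|ω * t| / (N + 1) + 1) * (|ω * t| / (N + 1))) ^ (2 * (N + 1))) * B := by
  let S : Finset ℤ := Finset.Icc (n - N) (n + N)
  let near := (S : Set ℤ).indicator f
  let far := (S : Set ℤ)ᶜ.indicator f
  have hindicator (A : Set ℤ) (m : ℤ) : |A.indicator f m| ≤ B :=
    (norm_indicator_le_norm_self f m).trans (hB m)
  have hsplit : propagator ω t f n = propagator ω t near n + propagator ω t far n := by
    rw [← Pi.add_apply, ← propagator_add ω t (hindicator _) (hindicator _),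
      Set.indicator_self_add_compl]
  have hcard : (S.card : ℝ) = 2 * N + 1 := by
    have : S.card = 2 * N + 1 := by rw [Int.card_Icc]; omega
    exact_mod_cast this
  have hnear : |propagator ω t near n| ≤ √S.card * B :=
    abs_propagator_le_sqrt_card_mul ω t (hindicator _) (fun m hm => Set.indicator_of_notMem hm f) n
  have hfar_zero (m : ℤ) (hm : |m - n| < (N + 1 : ℕ)) : far m = 0 :=
    Set.indicator_of_notMem (by
      rw [abs_lt] at hm
      simp only [Set.mem_compl_iff, not_not, Finset.mem_coe, S, Finset.mem_Icc]
      omega) f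
  have hfar := abs_propagator_le_exp_mul_pow ω t (hindicator _) N.succ_ne_zero hfar_zero
  rw [hcard] at hnear
  push_cast at hfar
  rw [hsplit, add_mul]
  exact (abs_add_le _ _).trans (add_le_add hnear hfar)

lemma sqrt_add_one_le {x : ℝ} (hx : 0 ≤ x) : √(x + 1) ≤ √x + 1 :=
  Real.sqrt_le_iff.2 ⟨by positivity, by
    linarith [Real.sq_sqrt hx, Real.sqrt_nonneg x, add_sq √x 1]⟩

lemma exp_add_one_mul_self_le_one {a c : ℝ} (hc : c * Real.exp c = 1 / Real.exp 1) (ha : 0 ≤ a)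
    (hac : a ≤ c) : Real.exp (a + 1) * a ≤ 1 :=
  calc Real.exp (a + 1) * a ≤ Real.exp (c + 1) * c := by gcongr
    _ = c * Real.exp c * Real.exp 1 := by rw [Real.exp_add]; ring
    _ = 1 := by rw [hc, one_div_mul_cancel (Real.exp_ne_zero 1)]

end HarmonicChain

open HarmonicChain in
theorem stmt10 (ω₁ γ : ℝ) (hω : 0 < ω₁)
    (hγpos : 0 < γ) (hγeq : (1/γ) * Real.exp (1/γ) = 1 / Real.exp 1)
    (q0 : ℤ → ℝ) (B : ℝ) (hB : ∀ n, |q0 n| ≤ B)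
    (q : ℤ → ℝ → ℝ)
    (hsol : ∀ n t, q n t = ∑' k : ℕ,
      (-1)^k * t^(2*k) / (Nat.factorial (2*k)) * ((Vop ω₁)^[k] q0) n) :
    ∀ t ≥ (0:ℝ), ∀ n : ℤ, |q n t| ≤ (Real.sqrt (2*γ*ω₁*t) + 2) * B := by
  intro t ht n
  have hB0 : 0 ≤ B := (abs_nonneg _).trans (hB 0)
  have hq : q n t = propagator ω₁ t q0 n := hsol n t
  let N := ⌊γ * (ω₁ * t)⌋₊
  have hN : (N : ℝ) ≤ γ * (ω₁ * t) := Nat.floor_le (by positivity)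
  have hnear : √(2 * N + 1) ≤ √(2 * γ * ω₁ * t) + 1 :=
    (Real.sqrt_le_sqrt (by linarith)).trans (sqrt_add_one_le (by positivity))
  have hα : |ω₁ * t| / (N + 1) ≤ 1 / γ := by
    rw [abs_of_nonneg (by positivity), div_le_div_iff₀ (by positivity) hγpos]
    linarith [Nat.lt_floor_add_one (γ * (ω₁ * t))]
  have hfar := exp_add_one_mul_self_le_one hγeq (by positivity) hα
  calc |q n t| ≤ _ := hq ▸ abs_propagator_le ω₁ t hB n N
    _ ≤ (√(2 * γ * ω₁ * t) + 1 + 1) * B := by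
        gcongr
        exact pow_le_one₀ (by positivity) hfar
    _ = (√(2 * γ * ω₁ * t) + 2) * B := by ring
end

section
/- For all n ∈ ℤ and t ∈ ℝ with n ≠ 0 and t ≠ 0, |J_n(t)| ≤ min(|n|^{-1/3}, |t|^{-1/3}). -/
open MeasureTheory

/-- Bessel function of the first kind of integer order. -/
noncomputable def besselJ (n : ℤ) (t : ℝ) : ℝ :=
  (1 / Real.pi) * ∫ φ in (0:ℝ)..Real.pi, Real.cos (t * Real.sin φ - n * φ)

/-!
Assume `n > 0`. For `v x = J_n (n eˣ)`, Bessel's equation reads `v'' = n² (1 - e²ˣ) v`, and `v`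
decays at `-∞`. Up to the turning point `x = 0` the coefficient is nonnegative, so `|v|` increases
and `|J_n|` is at most `|J_n(n)|` on `(0, n]`. Past it, `g x = e^{x/3} v x` has a decreasing Sonin
energy, so `|g|` never exceeds its value at the first critical point. Until then `v` keeps its sign,
and Sturm comparison with an explicit supersolution bounds `g` by a constant multiple of `v 0`.

This leaves a bound for `n^{1/3} J_n(n)`. For `n = 1` it follows from `|J_1(t)| ≤ |t| / 2`. For
`n ≥ 2` the phase `n (θ - sin θ)` is compared with a cubic near its critical point `θ = 0`, and
the remaining integral is integrated by parts twice, with a one-signed remainder.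
-/

namespace LandauBessel

open Set Filter Topology Real

lemma monotoneOn_of_hasDerivAt_nonneg {f f' : ℝ → ℝ} {D : Set ℝ} (hD : Convex ℝ D)
    (hf : ∀ x ∈ D, HasDerivAt f (f' x) x) (hf' : ∀ x ∈ D, 0 ≤ f' x) : MonotoneOn f D :=
  monotoneOn_of_hasDerivWithinAt_nonneg hD
    (fun x hx => (hf x hx).continuousAt.continuousWithinAt)
    (fun x hx => (hf x (interior_subset hx)).hasDerivWithinAt)
    (fun x hx => hf' x (interior_subset hx))

lemma antitoneOn_of_hasDerivAt_nonpos {f f' : ℝ → ℝ} {D : Set ℝ} (hD : Convex ℝ D)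
    (hf : ∀ x ∈ D, HasDerivAt f (f' x) x) (hf' : ∀ x ∈ D, f' x ≤ 0) : AntitoneOn f D :=
  antitoneOn_of_hasDerivWithinAt_nonpos hD
    (fun x hx => (hf x hx).continuousAt.continuousWithinAt)
    (fun x hx => (hf x (interior_subset hx)).hasDerivWithinAt)
    (fun x hx => hf' x (interior_subset hx))

lemma nonneg_of_hasDerivAt_nonneg_of_tendsto_atBot {f f' : ℝ → ℝ} {a : ℝ}
    (hf : ∀ x ≤ a, HasDerivAt f (f' x) x) (hf' : ∀ x ≤ a, 0 ≤ f' x)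
    (hlim : Tendsto f atBot (𝓝 0)) : 0 ≤ f a := by
  have hmono : MonotoneOn f (Iic a) := monotoneOn_of_hasDerivAt_nonneg (convex_Iic a) hf hf'
  refine le_of_tendsto hlim ?_
  filter_upwards [eventually_le_atBot a] with x hx
  exact hmono hx self_mem_Iic hx

lemma nonneg_or_exists_first_zero {f : ℝ → ℝ} {a b : ℝ} (hf : ContinuousOn f (Icc a b))
    (ha : 0 ≤ f a) :
    (∀ x ∈ Icc a b, 0 ≤ f x) ∨ ∃ c ∈ Icc a b, f c = 0 ∧ ∀ x ∈ Icc a c, 0 ≤ f x := by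
  have exists_zero : ∀ x ∈ Icc a b, f x < 0 → ∃ z ∈ Icc a b, z ≤ x ∧ f z = 0 := fun x hx hfx => by
    obtain ⟨z, hz, hfz⟩ := intermediate_value_Icc' hx.1
      (hf.mono (Icc_subset_Icc_right hx.2)) ⟨hfx.le, ha⟩
    exact ⟨z, ⟨hz.1, hz.2.trans hx.2⟩, hz.2, hfz⟩
  by_cases! hneg : ∀ x ∈ Icc a b, 0 ≤ f x
  · exact .inl hneg
  obtain ⟨x₀, hx₀, hfx₀⟩ := hneg
  obtain ⟨z₀, hz₀, -, hfz₀⟩ := exists_zero x₀ hx₀ hfx₀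
  obtain ⟨c, ⟨hc, hfc⟩, hleast⟩ := (isCompact_Icc.of_isClosed_subset
    (hf.preimage_isClosed_of_isClosed isClosed_Icc (isClosed_singleton (x := (0 : ℝ))))
    inter_subset_left).exists_isLeast ⟨z₀, hz₀, hfz₀⟩
  refine .inr ⟨c, hc, hfc, fun x hx => ?_⟩
  by_contra! hfx
  obtain ⟨z, hz, hzx, hfz⟩ := exists_zero x ⟨hx.1, hx.2.trans hc.2⟩ hfx
  have hcx : c = x := le_antisymm ((hleast ⟨hz, hfz⟩).trans hzx) hx.2
  exact hfx.ne (hcx ▸ hfc)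

section Sonin

variable {g g' c p p' : ℝ → ℝ}

lemma antitoneOn_sonin_energy {D : Set ℝ} (hD : Convex ℝ D)
    (hg : ∀ x ∈ D, HasDerivAt g (g' x) x)
    (hg' : ∀ x ∈ D, HasDerivAt g' (c x * g' x - p x * g x) x)
    (hp : ∀ x ∈ D, HasDerivAt p (p' x) x) (hp_pos : ∀ x ∈ D, 0 < p x)
    (hcp : ∀ x ∈ D, 2 * c x * p x ≤ p' x) :
    AntitoneOn (fun x => g x ^ 2 + g' x ^ 2 / p x) D := by
  have hderiv : ∀ x ∈ D, HasDerivAt (fun x => g x ^ 2 + g' x ^ 2 / p x)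
      (g' x ^ 2 * (2 * c x * p x - p' x) / p x ^ 2) x := fun x hx => by
    have hpx := (hp_pos x hx).ne'
    refine (((hg x hx).pow 2).add (((hg' x hx).pow 2).div (hp x hx) hpx)).congr_deriv ?_
    simp only [Pi.pow_apply]
    field_simp
    ring
  exact antitoneOn_of_hasDerivAt_nonpos hD hderiv fun x hx =>
    div_nonpos_of_nonpos_of_nonneg (mul_nonpos_of_nonneg_of_nonpos (sq_nonneg _)
      (sub_nonpos.2 (hcp x hx))) (sq_nonneg _)

/-- `g` can only grow up to the first zero of its derivative, where the Sonin energy is `g ^ 2`. -/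
lemma abs_le_of_bound_before_critical {a b M : ℝ} (hab : a ≤ b)
    (hg : ∀ x ∈ Icc a b, HasDerivAt g (g' x) x)
    (hg' : ∀ x ∈ Icc a b, HasDerivAt g' (c x * g' x - p x * g x) x)
    (hp : ∀ x ∈ Icc a b, HasDerivAt p (p' x) x) (hp_pos : ∀ x ∈ Icc a b, 0 < p x)
    (hcp : ∀ x ∈ Icc a b, 2 * c x * p x ≤ p' x) (ha : 0 ≤ g a) (ha' : 0 ≤ g' a)
    (hM : ∀ x ∈ Icc a b, (∀ y ∈ Icc a x, 0 ≤ g y) → g x ≤ M) : |g b| ≤ M := by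
  have growth : ∀ x ∈ Icc a b, (∀ y ∈ Icc a x, 0 ≤ g' y) → 0 ≤ g x ∧ g x ≤ M := by
    intro x hx hx'
    have hsub : Icc a x ⊆ Icc a b := Icc_subset_Icc_right hx.2
    have hmono : MonotoneOn g (Icc a x) := monotoneOn_of_hasDerivAt_nonneg (convex_Icc a x)
      (fun y hy => hg y (hsub hy)) hx'
    have hpos : ∀ y ∈ Icc a x, 0 ≤ g y := fun y hy =>
      ha.trans (hmono ⟨le_rfl, hx.1⟩ hy hy.1)
    exact ⟨hpos x ⟨hx.1, le_rfl⟩, hM x hx hpos⟩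
  have hb : b ∈ Icc a b := ⟨hab, le_rfl⟩
  rcases nonneg_or_exists_first_zero
    (fun x hx => (hg' x hx).continuousAt.continuousWithinAt) ha' with hnn | ⟨z, hz, hz0, hnn⟩
  · obtain ⟨hpos, hle⟩ := growth b hb hnn
    rwa [abs_of_nonneg hpos]
  · obtain ⟨hpos, hle⟩ := growth z hz hnn
    have henergy := antitoneOn_sonin_energy (convex_Icc a b) hg hg' hp hp_pos hcp hz hb hz.2
    have hkin : 0 ≤ g' b ^ 2 / p b := div_nonneg (sq_nonneg _) (hp_pos b hb).le
    simp only [hz0, ne_eq, OfNat.ofNat_ne_zero, not_false_eq_true, zero_pow, zero_div,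
      add_zero] at henergy
    exact (abs_le_of_sq_le_sq (by linarith) hpos).trans hle

end Sonin

/-- `v`, with derivative `v'`, solves `v'' = Q v` and decays together with `v'` at `-∞`.
Bessel functions of nonzero order become such solutions in a logarithmic variable. -/
structure IsRecessiveSolution (Q v v' : ℝ → ℝ) : Prop where
  hasDerivAt : ∀ x, HasDerivAt v (v' x) x
  hasDerivAt_deriv : ∀ x, HasDerivAt v' (Q x * v x) x
  tendsto : Tendsto v atBot (𝓝 0)
  tendsto_deriv : Tendsto v' atBot (𝓝 0)

namespace IsRecessiveSolution

variable {Q v v' : ℝ → ℝ} {a : ℝ}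

lemma neg (h : IsRecessiveSolution Q v v') :
    IsRecessiveSolution Q (fun x => -v x) (fun x => -v' x) where
  hasDerivAt x := (h.hasDerivAt x).neg
  hasDerivAt_deriv x := (h.hasDerivAt_deriv x).neg.congr_deriv (mul_neg _ _).symm
  tendsto := by simpa using h.tendsto.neg
  tendsto_deriv := by simpa using h.tendsto_deriv.neg

lemma mul_deriv_nonneg (h : IsRecessiveSolution Q v v') (hQ : ∀ x ≤ a, 0 ≤ Q x) :
    0 ≤ v a * v' a := by
  refine nonneg_of_hasDerivAt_nonneg_of_tendsto_atBot (f := fun x => v x * v' x)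
    (fun x _ => (h.hasDerivAt x).mul (h.hasDerivAt_deriv x)) (fun x hx => ?_)
    (by simpa using h.tendsto.mul h.tendsto_deriv)
  nlinarith [mul_nonneg (hQ x hx) (sq_nonneg (v x)), sq_nonneg (v' x)]

lemma monotoneOn_abs (h : IsRecessiveSolution Q v v') (hQ : ∀ x ≤ a, 0 ≤ Q x) :
    MonotoneOn (fun x => |v x|) (Iic a) := by
  have hsq : MonotoneOn (fun x => v x ^ 2) (Iic a) :=
    monotoneOn_of_hasDerivAt_nonneg (convex_Iic a) (f' := fun x => 2 * (v x * v' x))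
      (fun x _ => ((h.hasDerivAt x).pow 2).congr_deriv (by ring))
      (fun x hx => mul_nonneg two_pos.le
        (h.mul_deriv_nonneg fun y (hy : y ≤ x) => hQ y (hy.trans hx)))
  exact fun x hx y hy hxy => sq_le_sq.1 (hsq hx hy hxy)

lemma nonneg (h : IsRecessiveSolution Q v v') (hQ : ∀ x ≤ a, 0 ≤ Q x) (ha : 0 ≤ v a) {x : ℝ}
    (hx : x ≤ a) : 0 ≤ v x := by
  by_contra! hneg
  obtain ⟨z, hz, hvz⟩ := intermediate_value_Icc hx
    (fun y _ => (h.hasDerivAt y).continuousAt.continuousWithinAt) ⟨hneg.le, ha⟩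
  have hle : |v x| ≤ |v z| := h.monotoneOn_abs hQ hx hz.2 hz.1
  rw [hvz, abs_zero] at hle
  exact hneg.ne (abs_nonpos_iff.1 hle)

lemma deriv_nonneg (h : IsRecessiveSolution Q v v') (hQ : ∀ x ≤ a, 0 ≤ Q x) (ha : 0 ≤ v a) :
    0 ≤ v' a :=
  nonneg_of_hasDerivAt_nonneg_of_tendsto_atBot (fun x _ => h.hasDerivAt_deriv x)
    (fun x hx => mul_nonneg (hQ x hx) (h.nonneg hQ ha hx)) h.tendsto_deriv

lemma antitoneOn_div (h : IsRecessiveSolution Q v v') {y y' y'' : ℝ → ℝ}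
    (hy : ∀ x ≤ a, HasDerivAt y (y' x) x) (hy' : ∀ x ≤ a, HasDerivAt y' (y'' x) x)
    (hpos : ∀ x ≤ a, 0 < y x) (hQy : ∀ x ≤ a, Q x * y x ≤ y'' x)
    (hlim : Tendsto (fun x => y' x * v x - y x * v' x) atBot (𝓝 0)) (hv : ∀ x ≤ a, 0 ≤ v x) :
    AntitoneOn (fun x => v x / y x) (Iic a) := by
  have wronskian_nonneg : ∀ b ≤ a, 0 ≤ y' b * v b - y b * v' b := fun b hb =>
    nonneg_of_hasDerivAt_nonneg_of_tendsto_atBot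
      (f := fun x => y' x * v x - y x * v' x) (f' := fun x => (y'' x - Q x * y x) * v x)
      (fun x hx => (((hy' x (hx.trans hb)).mul (h.hasDerivAt x)).sub
        ((hy x (hx.trans hb)).mul (h.hasDerivAt_deriv x))).congr_deriv (by ring))
      (fun x hx => mul_nonneg (sub_nonneg.2 (hQy x (hx.trans hb))) (hv x (hx.trans hb))) hlim
  have hderiv : ∀ x ≤ a, HasDerivAt (fun x => v x / y x) ((v' x * y x - v x * y' x) / y x ^ 2) x :=
    fun x hx => (h.hasDerivAt x).div (hy x hx) (hpos x hx).ne'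
  exact antitoneOn_of_hasDerivAt_nonpos (convex_Iic a) hderiv fun x hx =>
    div_nonpos_of_nonpos_of_nonneg (by linarith [wronskian_nonneg x hx]) (sq_nonneg _)

end IsRecessiveSolution

/-- The coefficient of `v'' = Q v` for `v x = J_ν (ν eˣ)`; the turning point is `x = 0`. -/
noncomputable def besselPotential (ν x : ℝ) : ℝ := ν ^ 2 * (1 - exp (2 * x))

lemma besselPotential_nonneg (ν : ℝ) {x : ℝ} (hx : x ≤ 0) : 0 ≤ besselPotential ν x :=
  mul_nonneg (sq_nonneg ν) (sub_nonneg.2 (exp_le_one_iff.2 (by linarith)))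

lemma hasDerivAt_exp_mul (k x : ℝ) : HasDerivAt (fun x => exp (k * x)) (k * exp (k * x)) x :=
  ((hasDerivAt_id x).const_mul k).exp.congr_deriv (by simp only [id]; ring)

lemma hasDerivAt_besselPotential (ν x : ℝ) :
    HasDerivAt (besselPotential ν) (-(2 * ν ^ 2 * exp (2 * x))) x :=
  (((hasDerivAt_exp_mul 2 x).const_sub 1).const_mul (ν ^ 2)).congr_deriv (by ring)

/-- The logarithmic derivative `ω + ω² (1 - e²ˣ) / 2` of `besselSupersolution ω`. It nearly solves
the Riccati equation `W' + W² = Q` of the Bessel potential with `ν² = ω³ + ω²`. -/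
noncomputable def besselRiccati (ω x : ℝ) : ℝ := ω + ω ^ 2 / 2 * (1 - exp (2 * x))

/-- The comparison function `exp (∫ W)` for `W = besselRiccati ω`, used to bound recessive
solutions past the turning point. -/
noncomputable def besselSupersolution (ω x : ℝ) : ℝ :=
  exp ((ω + ω ^ 2 / 2) * x - ω ^ 2 / 4 * exp (2 * x))

lemma hasDerivAt_besselRiccati (ω x : ℝ) :
    HasDerivAt (besselRiccati ω) (-(ω ^ 2 * exp (2 * x))) x :=
  ((((hasDerivAt_exp_mul 2 x).const_sub 1).const_mul (ω ^ 2 / 2)).const_add ω).congr_deriv (by ring)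

lemma hasDerivAt_besselSupersolution (ω x : ℝ) :
    HasDerivAt (besselSupersolution ω) (besselSupersolution ω x * besselRiccati ω x) x := by
  have hexponent := ((hasDerivAt_id x).const_mul (ω + ω ^ 2 / 2)).sub
    ((hasDerivAt_exp_mul 2 x).const_mul (ω ^ 2 / 4))
  refine hexponent.exp.congr_deriv ?_
  simp only [besselSupersolution, besselRiccati, Pi.sub_apply, id]
  ring

lemma besselPotential_le_riccati {ν ω : ℝ} (hων : ω ^ 3 + ω ^ 2 = ν ^ 2) (x : ℝ) :
    besselPotential ν x ≤ besselRiccati ω x ^ 2 - ω ^ 2 * exp (2 * x) := by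
  have hdefect : besselRiccati ω x ^ 2 - ω ^ 2 * exp (2 * x) - besselPotential ν x =
      (ω ^ 2 / 2 * (1 - exp (2 * x))) ^ 2 := by
    rw [besselPotential, ← hων, besselRiccati]
    ring
  linarith [sq_nonneg (ω ^ 2 / 2 * (1 - exp (2 * x)))]

lemma tendsto_exp_two_mul_atBot : Tendsto (fun x : ℝ => exp (2 * x)) atBot (𝓝 0) :=
  tendsto_exp_atBot.comp (tendsto_id.const_mul_atBot two_pos)

lemma tendsto_besselRiccati_atBot (ω : ℝ) :
    Tendsto (besselRiccati ω) atBot (𝓝 (ω + ω ^ 2 / 2)) := by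
  have hlim := ((tendsto_exp_two_mul_atBot.const_sub 1).const_mul (ω ^ 2 / 2)).const_add ω
  rwa [sub_zero, mul_one] at hlim

lemma tendsto_besselSupersolution_atBot {ω : ℝ} (hω : 0 < ω) :
    Tendsto (besselSupersolution ω) atBot (𝓝 0) :=
  tendsto_exp_atBot.comp ((tendsto_id.const_mul_atBot (by positivity)).atBot_add
    (tendsto_exp_two_mul_atBot.const_mul (ω ^ 2 / 4)).neg)

lemma besselSupersolution_exponent_le {ω x : ℝ} (hω : 0 < ω) (hx : 0 ≤ x) :
    (ω + ω ^ 2 / 2 + 1 / 3) * x - ω ^ 2 / 4 * (exp (2 * x) - 1) ≤ 1 / 2 + 0.13 / ω := by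
  have hexp : 1 + 2 * x + 2 * x ^ 2 + 4 / 3 * x ^ 3 ≤ exp (2 * x) := by
    have := sum_le_exp_of_nonneg (show 0 ≤ 2 * x by positivity) 4
    norm_num [Finset.sum_range_succ, Nat.factorial] at this
    linarith
  have hs : 0 ≤ ω * x := by positivity
  have hquad : ω * x - (ω * x) ^ 2 / 2 ≤ 1 / 2 := by linarith [sq_nonneg (ω * x - 1)]
  have hcubic : ω * x - (ω * x) ^ 3 ≤ 0.39 := by
    nlinarith [mul_nonneg hs (sq_nonneg (ω * x - 0.577)), sq_nonneg (ω * x - 0.577)]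
  calc (ω + ω ^ 2 / 2 + 1 / 3) * x - ω ^ 2 / 4 * (exp (2 * x) - 1)
      ≤ (ω + ω ^ 2 / 2 + 1 / 3) * x - ω ^ 2 / 4 * (2 * x + 2 * x ^ 2 + 4 / 3 * x ^ 3) := by
        gcongr; linarith
    _ = (ω * x - (ω * x) ^ 2 / 2) + (ω * x - (ω * x) ^ 3) / 3 / ω := by field_simp; ring
    _ ≤ 1 / 2 + 0.13 / ω := by gcongr; linarith

namespace IsRecessiveSolution

variable {ν ω T : ℝ} {v v' : ℝ → ℝ}

lemma le_mul_besselSupersolution (h : IsRecessiveSolution (besselPotential ν) v v') (hω : 0 < ω)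
    (hων : ω ^ 3 + ω ^ 2 = ν ^ 2) (hT : 0 ≤ T) (hv : ∀ x ≤ T, 0 ≤ v x) :
    v T ≤ v 0 * exp ((ω + ω ^ 2 / 2) * T - ω ^ 2 / 4 * (exp (2 * T) - 1)) := by
  have hlim : Tendsto (fun x => besselSupersolution ω x * besselRiccati ω x * v x -
      besselSupersolution ω x * v' x) atBot (𝓝 0) := by
    have hy := tendsto_besselSupersolution_atBot hω
    simpa using ((hy.mul (tendsto_besselRiccati_atBot ω)).mul h.tendsto).sub
      (hy.mul h.tendsto_deriv)
  have hanti := h.antitoneOn_div (a := T)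
    (fun x _ => hasDerivAt_besselSupersolution ω x)
    (fun x _ => (hasDerivAt_besselSupersolution ω x).mul (hasDerivAt_besselRiccati ω x))
    (fun x _ => exp_pos _) (fun x _ => by
      have := mul_le_mul_of_nonneg_left (besselPotential_le_riccati hων x)
        (exp_pos ((ω + ω ^ 2 / 2) * x - ω ^ 2 / 4 * exp (2 * x))).le
      simp only [besselSupersolution]
      linarith) hlim hv
  have hratio : v T / besselSupersolution ω T ≤ v 0 / besselSupersolution ω 0 :=
    hanti hT self_mem_Iic hT
  calc v T ≤ v 0 / besselSupersolution ω 0 * besselSupersolution ω T :=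
        (div_le_iff₀ (exp_pos _)).1 hratio
    _ = v 0 * exp ((ω + ω ^ 2 / 2) * T - ω ^ 2 / 4 * (exp (2 * T) - 1)) := by
        rw [div_mul_eq_mul_div, mul_div_assoc, besselSupersolution, besselSupersolution, ← exp_sub]
        simp only [mul_zero, exp_zero]
        ring_nf

lemma exp_mul_le (h : IsRecessiveSolution (besselPotential ν) v v') (hω : 0 < ω)
    (hων : ω ^ 3 + ω ^ 2 = ν ^ 2) (hT : 0 ≤ T) (hv : ∀ x ≤ T, 0 ≤ v x) :
    exp (T / 3) * v T ≤ v 0 * exp (1 / 2 + 0.13 / ω) := by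
  have h0 : 0 ≤ v 0 := hv 0 hT
  calc exp (T / 3) * v T
      ≤ exp (T / 3) * (v 0 * exp ((ω + ω ^ 2 / 2) * T - ω ^ 2 / 4 * (exp (2 * T) - 1))) := by
        gcongr
        exact h.le_mul_besselSupersolution hω hων hT hv
    _ = v 0 * exp ((ω + ω ^ 2 / 2 + 1 / 3) * T - ω ^ 2 / 4 * (exp (2 * T) - 1)) := by
        rw [mul_left_comm, ← exp_add]
        ring_nf
    _ ≤ v 0 * exp (1 / 2 + 0.13 / ω) := by
        gcongr
        exact besselSupersolution_exponent_le hω hT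

/-- The Sonin energy of `e^{x/3} v` decreases past the turning point; its monotonicity condition
is tightest at `x = 0`, where it reads `2 / 27 ≤ ν ^ 2`. -/
lemma exp_mul_abs_le_of_nonneg (h : IsRecessiveSolution (besselPotential ν) v v')
    (hν : 2 / 27 ≤ ν ^ 2) (hω : 0 < ω) (hων : ω ^ 3 + ω ^ 2 = ν ^ 2) (h0 : 0 ≤ v 0)
    (hT : 0 ≤ T) : exp (T / 3) * |v T| ≤ v 0 * exp (1 / 2 + 0.13 / ω) := by
  have hv'0 : 0 ≤ v' 0 := h.deriv_nonneg (fun x => besselPotential_nonneg ν) h0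
  have hexp : ∀ x, HasDerivAt (fun x => exp (x / 3)) (exp (x / 3) / 3) x := fun x =>
    ((hasDerivAt_id x).div_const 3).exp.congr_deriv (by simp only [id]; ring)
  have hgrowth : ∀ x ∈ Icc 0 T, 0 ≤ ν ^ 2 * (exp (2 * x) - 1) := fun x hx =>
    mul_nonneg (sq_nonneg ν) (sub_nonneg.2 (one_le_exp (by linarith [hx.1])))
  rw [← abs_of_pos (exp_pos (T / 3)), ← abs_mul]
  refine abs_le_of_bound_before_critical (g := fun x => exp (x / 3) * v x)
    (g' := fun x => exp (x / 3) * (v' x + v x / 3)) (c := fun _ => 2 / 3)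
    (p := fun x => 1 / 9 - besselPotential ν x) hT
    (fun x _ => ((hexp x).mul (h.hasDerivAt x)).congr_deriv (by ring))
    (fun x _ => ((hexp x).mul ((h.hasDerivAt_deriv x).add
      ((h.hasDerivAt x).div_const 3))).congr_deriv (by simp only [Pi.add_apply]; ring))
    (fun x _ => (hasDerivAt_besselPotential ν x).const_sub _)
    (fun x hx => by simp only [besselPotential]; linarith [hgrowth x hx])
    (fun x hx => by simp only [besselPotential]; linarith [hgrowth x hx])
    (by positivity) (by positivity) (fun x hx hnn => h.exp_mul_le hω hων hx.1 fun y hy => ?_)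
  rcases le_total y 0 with hy0 | hy0
  · exact h.nonneg (fun z => besselPotential_nonneg ν) h0 hy0
  · exact nonneg_of_mul_nonneg_right (hnn y ⟨hy0, hy⟩) (exp_pos _)

lemma exp_mul_abs_le (h : IsRecessiveSolution (besselPotential ν) v v') (hν : 2 / 27 ≤ ν ^ 2)
    (hω : 0 < ω) (hων : ω ^ 3 + ω ^ 2 = ν ^ 2) (hT : 0 ≤ T) :
    exp (T / 3) * |v T| ≤ |v 0| * exp (1 / 2 + 0.13 / ω) := by
  rcases le_total 0 (v 0) with h0 | h0
  · rw [abs_of_nonneg h0]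
    exact h.exp_mul_abs_le_of_nonneg hν hω hων h0 hT
  · rw [abs_of_nonpos h0, ← abs_neg]
    exact h.neg.exp_mul_abs_le_of_nonneg hν hω hων (neg_nonneg.2 h0) hT

end IsRecessiveSolution

/-- The `k`-th derivative of `besselJ n`, obtained by differentiating under the integral sign. -/
noncomputable def besselJDeriv (k : ℕ) (n : ℤ) (t : ℝ) : ℝ :=
  (1 / π) * ∫ φ in (0:ℝ)..π, sin φ ^ k * cos (t * sin φ - n * φ + k * (π / 2))

lemma besselJDeriv_zero (n : ℤ) : besselJDeriv 0 n = besselJ n := by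
  ext t
  simp [besselJDeriv, besselJ]

lemma hasDerivAt_besselJDeriv (k : ℕ) (n : ℤ) (t : ℝ) :
    HasDerivAt (besselJDeriv k n) (besselJDeriv (k + 1) n t) t := by
  set F : ℕ → ℝ → ℝ → ℝ := fun k t φ => sin φ ^ k * cos (t * sin φ - n * φ + k * (π / 2)) with hF
  have hcont : ∀ k t, Continuous (F k t) := fun k t => by fun_prop
  have hbound : ∀ k t φ, ‖F k t φ‖ ≤ 1 := fun k t φ => by
    rw [norm_mul, norm_pow, norm_eq_abs, norm_eq_abs]
    exact mul_le_one₀ (pow_le_one₀ (abs_nonneg _) (abs_sin_le_one φ)) (abs_nonneg _)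
      (abs_cos_le_one _)
  have hderiv : ∀ φ s, HasDerivAt (fun s => F k s φ) (F (k + 1) s φ) s := fun φ s => by
    have hphase : HasDerivAt (fun s => s * sin φ - n * φ + k * (π / 2)) (sin φ) s :=
      ((((hasDerivAt_id s).mul_const (sin φ)).sub_const _).add_const _).congr_deriv (one_mul _)
    refine (hphase.cos.const_mul (sin φ ^ k)).congr_deriv ?_
    simp only [hF, Nat.cast_add, Nat.cast_one, add_mul, one_mul, ← add_assoc, cos_add_pi_div_two]
    ring
  exact (intervalIntegral.hasDerivAt_integral_of_dominated_loc_of_deriv_le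
    (bound := fun _ => 1) univ_mem (.of_forall fun s => (hcont k s).aestronglyMeasurable)
    ((hcont k t).intervalIntegrable _ _) (hcont (k + 1) t).aestronglyMeasurable
    (.of_forall fun φ _ s _ => hbound (k + 1) s φ) intervalIntegrable_const
    (.of_forall fun φ _ s _ => hderiv φ s)).2.const_mul (1 / π)

lemma hasDerivAt_besselJ (n : ℤ) (t : ℝ) : HasDerivAt (besselJ n) (besselJDeriv 1 n t) t := by
  rw [← besselJDeriv_zero]
  exact hasDerivAt_besselJDeriv 0 n t

lemma besselJ_equation (n : ℤ) (t : ℝ) :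
    t ^ 2 * besselJDeriv 2 n t + t * besselJDeriv 1 n t + (t ^ 2 - n ^ 2) * besselJ n t = 0 := by
  have hcos_one : ∀ x, cos (x + (1 : ℕ) * (π / 2)) = -sin x := fun x => by
    rw [Nat.cast_one, one_mul, cos_add_pi_div_two]
  have hcos_two : ∀ x, cos (x + (2 : ℕ) * (π / 2)) = -cos x := fun x => by
    rw [Nat.cast_two, mul_div_cancel₀ π two_ne_zero, cos_add_pi]
  have hprimitive : ∀ φ ∈ uIcc (0:ℝ) π, HasDerivAt
      (fun φ => (t * cos φ + n) * sin (t * sin φ - n * φ))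
      (t ^ 2 * (sin φ ^ 2 * cos (t * sin φ - n * φ + (2 : ℕ) * (π / 2))) +
        t * (sin φ ^ 1 * cos (t * sin φ - n * φ + (1 : ℕ) * (π / 2))) +
        (t ^ 2 - n ^ 2) * cos (t * sin φ - n * φ)) φ := fun φ _ => by
    have hphase : HasDerivAt (fun φ : ℝ => t * sin φ - n * φ) (t * cos φ - n) φ :=
      (((hasDerivAt_sin φ).const_mul t).sub ((hasDerivAt_id φ).const_mul (n : ℝ))).congr_deriv
        (by ring)
    refine ((((hasDerivAt_cos φ).const_mul t).add_const (n : ℝ)).mul hphase.sin).congr_deriv ?_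
    rw [hcos_one, hcos_two]
    linear_combination (t ^ 2 * cos (t * sin φ - n * φ)) * sin_sq_add_cos_sq φ
  have hint := intervalIntegral.integral_eq_sub_of_hasDerivAt hprimitive
    (Continuous.intervalIntegrable (by fun_prop) _ _)
  rw [intervalIntegral.integral_add (Continuous.intervalIntegrable (by fun_prop) _ _)
    (Continuous.intervalIntegrable (by fun_prop) _ _),
    intervalIntegral.integral_add (Continuous.intervalIntegrable (by fun_prop) _ _)
    (Continuous.intervalIntegrable (by fun_prop) _ _),
    intervalIntegral.integral_const_mul, intervalIntegral.integral_const_mul,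
    intervalIntegral.integral_const_mul] at hint
  have hend : sin (t * sin π - n * π) = 0 := by
    rw [sin_pi, mul_zero, zero_sub, sin_neg, sin_int_mul_pi, neg_zero]
  simp only [hend, sin_zero, mul_zero, sub_zero] at hint
  simp only [besselJ, besselJDeriv]
  linear_combination (1 / π) * hint

lemma besselJ_zero_right {n : ℤ} (hn : n ≠ 0) : besselJ n 0 = 0 := by
  have hint : ∫ φ in (0:ℝ)..π, cos ((n : ℝ) * φ) = 0 := by
    rw [intervalIntegral.integral_comp_mul_left (fun x => cos x) (Int.cast_ne_zero.2 hn)]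
    simp [sin_int_mul_pi]
  simp [besselJ, hint]

lemma isRecessiveSolution_besselJ {n : ℤ} (hn : n ≠ 0) :
    IsRecessiveSolution (besselPotential n) (fun x => besselJ n (n * exp x))
      (fun x => n * exp x * besselJDeriv 1 n (n * exp x)) := by
  have harg : ∀ x, HasDerivAt (fun x : ℝ => (n : ℝ) * exp x) (n * exp x) x := fun x =>
    (hasDerivAt_exp x).const_mul _
  have harg_lim : Tendsto (fun x : ℝ => (n : ℝ) * exp x) atBot (𝓝 0) := by
    simpa using tendsto_exp_atBot.const_mul (n : ℝ)
  refine ⟨fun x => ?_, fun x => ?_, ?_, ?_⟩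
  · exact ((hasDerivAt_besselJ n (n * exp x)).comp x (harg x)).congr_deriv (mul_comm _ _)
  · refine ((harg x).mul
      ((hasDerivAt_besselJDeriv 1 n (n * exp x)).comp x (harg x))).congr_deriv ?_
    rw [besselPotential, two_mul, exp_add]
    simp only [Function.comp]
    linear_combination besselJ_equation n (n * exp x)
  · simpa [Function.comp_def, besselJ_zero_right hn] using
      (hasDerivAt_besselJ n 0).continuousAt.tendsto.comp harg_lim
  · simpa using harg_lim.mul ((hasDerivAt_besselJDeriv 1 n 0).continuousAt.tendsto.comp harg_lim)

lemma besselJ_neg_neg (n : ℤ) (t : ℝ) : besselJ (-n) (-t) = besselJ n t := by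
  simp only [besselJ]
  congr! 3 with φ
  rw [← cos_neg]
  push_cast
  ring_nf

lemma besselJ_neg_left (n : ℤ) (t : ℝ) : besselJ (-n) t = (-1) ^ n * besselJ n t := by
  have hreflect : ∀ φ : ℝ, cos (t * sin (π - φ) - (-n : ℤ) * (π - φ)) =
      (-1) ^ n * cos (t * sin φ - n * φ) := fun φ => by
    have hphase : t * sin (π - φ) - (-n : ℤ) * (π - φ) = t * sin φ - n * φ + n * π := by
      rw [sin_pi_sub]
      push_cast
      ring
    rw [hphase, cos_add_int_mul_pi]
  have hsubst := intervalIntegral.integral_comp_sub_left (a := 0) (b := π)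
    (fun φ => cos (t * sin φ - (-n : ℤ) * φ)) π
  simp only [hreflect, intervalIntegral.integral_const_mul, sub_self, sub_zero] at hsubst
  rw [besselJ, ← hsubst, besselJ]
  ring

lemma abs_besselJ_abs (n : ℤ) (t : ℝ) : |besselJ (|n|) (|t|)| = |besselJ n t| := by
  have hneg : ∀ (n : ℤ) (t : ℝ), |besselJ (-n) t| = |besselJ n t| := fun n t => by
    rw [besselJ_neg_left, abs_mul, abs_neg_one_zpow, one_mul]
  rcases abs_choice n with h | h <;> rcases abs_choice t with h' | h' <;> rw [h, h']
  · rw [← hneg n (-t), besselJ_neg_neg]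
  · rw [hneg]
  · rw [besselJ_neg_neg]

lemma besselJ_one (t : ℝ) :
    besselJ 1 t = (1 / π) * ∫ θ in (0:ℝ)..π, sin θ * sin (t * sin θ) := by
  have hodd : ∫ θ in (0:ℝ)..π, cos θ * cos (t * sin θ) = 0 := by
    have hsubst := intervalIntegral.integral_comp_sub_left (a := 0) (b := π)
      (fun θ => cos θ * cos (t * sin θ)) π
    simp only [cos_pi_sub, sin_pi_sub, neg_mul, intervalIntegral.integral_neg, sub_self,
      sub_zero] at hsubst
    linarith
  have hcos : ∀ θ : ℝ, cos (t * sin θ - (1 : ℤ) * θ) =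
      cos θ * cos (t * sin θ) + sin θ * sin (t * sin θ) := fun θ => by
    rw [Int.cast_one, one_mul, cos_sub]
    ring
  simp only [besselJ, hcos]
  rw [intervalIntegral.integral_add (Continuous.intervalIntegrable (by fun_prop) _ _)
    (Continuous.intervalIntegrable (by fun_prop) _ _), hodd, zero_add]

lemma abs_besselJ_one_le (t : ℝ) : |besselJ 1 t| ≤ |t| / 2 := by
  have hle : |∫ θ in (0:ℝ)..π, sin θ * sin (t * sin θ)| ≤ ∫ θ in (0:ℝ)..π, |t| * sin θ ^ 2 := by
    refine intervalIntegral.norm_integral_le_of_norm_le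
      (f := fun θ => sin θ * sin (t * sin θ)) pi_pos.le (.of_forall fun θ _ => ?_)
      (Continuous.intervalIntegrable (by fun_prop) _ _)
    calc ‖sin θ * sin (t * sin θ)‖ = |sin θ| * |sin (t * sin θ)| := abs_mul _ _
      _ ≤ |sin θ| * |t * sin θ| :=
        mul_le_mul_of_nonneg_left abs_sin_le_abs (abs_nonneg _)
      _ = |t| * sin θ ^ 2 := by rw [abs_mul, ← sq_abs (sin θ)]; ring
  have hsq : ∫ θ in (0:ℝ)..π, sin θ ^ 2 = π / 2 := by simp [integral_sin_sq]
  rw [intervalIntegral.integral_const_mul, hsq] at hle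
  rw [besselJ_one, abs_mul, abs_of_pos (by positivity), one_div, inv_mul_le_iff₀ pi_pos]
  linarith

lemma cos_le_quartic {x : ℝ} (hx : 0 ≤ x) : cos x ≤ 1 - x ^ 2 / 2 + x ^ 4 / 24 := by
  have hderiv : ∀ y, HasDerivAt (fun y : ℝ => 1 - y ^ 2 / 2 + y ^ 4 / 24 - cos y)
      (sin y - (y - y ^ 3 / 6)) y := fun y =>
    (((((hasDerivAt_pow 2 y).div_const 2).const_sub 1).add
      ((hasDerivAt_pow 4 y).div_const 24)).sub (hasDerivAt_cos y)).congr_deriv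
        (by push_cast; ring)
  have hmono := monotoneOn_of_hasDerivAt_nonneg (convex_Ici 0) (fun y _ => hderiv y)
    (fun y hy => sub_nonneg.2 (sin_ge_sub_cube hy)) self_mem_Ici hx hx
  norm_num at hmono
  linarith

lemma sin_le_quintic {x : ℝ} (hx : 0 ≤ x) : sin x ≤ x - x ^ 3 / 6 + x ^ 5 / 120 := by
  have hderiv : ∀ y, HasDerivAt (fun y : ℝ => y - y ^ 3 / 6 + y ^ 5 / 120 - sin y)
      (1 - y ^ 2 / 2 + y ^ 4 / 24 - cos y) y := fun y =>
    ((((hasDerivAt_id y).sub ((hasDerivAt_pow 3 y).div_const 6)).add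
      ((hasDerivAt_pow 5 y).div_const 120)).sub (hasDerivAt_sin y)).congr_deriv
        (by push_cast; ring)
  have hmono := monotoneOn_of_hasDerivAt_nonneg (convex_Ici 0) (fun y _ => hderiv y)
    (fun y hy => sub_nonneg.2 (cos_le_quartic hy)) self_mem_Ici hx hx
  norm_num at hmono
  linarith

lemma integral_cos_le_of_cubic_le {h : ℝ → ℝ} {K b : ℝ} (hb : 0 ≤ b) (hK : 0 ≤ K)
    (hh : Continuous h) (hcubic : ∀ x ∈ Icc 0 b, K * x ^ 3 ≤ h x) (hπ : ∀ x ∈ Icc 0 b, h x ≤ π) :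
    ∫ x in (0:ℝ)..b, cos (h x) ≤ b - K ^ 2 * b ^ 7 / 14 + K ^ 4 * b ^ 13 / 312 := by
  have hderiv : ∀ x, HasDerivAt (fun x => x - K ^ 2 * x ^ 7 / 14 + K ^ 4 * x ^ 13 / 312)
      (1 - (K * x ^ 3) ^ 2 / 2 + (K * x ^ 3) ^ 4 / 24) x := fun x =>
    (((hasDerivAt_id x).sub (((hasDerivAt_pow 7 x).const_mul (K ^ 2)).div_const 14)).add
      (((hasDerivAt_pow 13 x).const_mul (K ^ 4)).div_const 312)).congr_deriv
        (by push_cast; ring)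
  have hle := intervalIntegral.integral_le_sub_of_hasDeriv_right_of_le hb
    (fun x _ => (hderiv x).continuousAt.continuousWithinAt)
    (fun x _ => (hderiv x).hasDerivWithinAt)
    (continuous_cos.comp hh).integrableOn_Icc (fun x hx => by
      have hx' := Ioo_subset_Icc_self hx
      have hnn : 0 ≤ K * x ^ 3 := mul_nonneg hK (pow_nonneg hx'.1 3)
      exact (cos_le_cos_of_nonneg_of_le_pi hnn (hπ x hx') (hcubic x hx')).trans
        (cos_le_quartic hnn))
  simpa using hle

/-- The boundary term of two integrations by parts of `σ cos h`, with `h'` and `h''` the derivatives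
of the phase `h`. The constant `1` in the second summand makes the remainder one-signed. -/
noncomputable def phaseBoundary (σ : ℝ) (h h' h'' : ℝ → ℝ) (x : ℝ) : ℝ :=
  σ * sin (h x) / h' x - (1 + σ * cos (h x)) * (h'' x / h' x ^ 3)

lemma integral_mul_cos_le_phaseBoundary {h h' h'' q' : ℝ → ℝ} {a b σ : ℝ} (hab : a ≤ b)
    (hσ : |σ| ≤ 1) (hh : ∀ x ∈ Icc a b, HasDerivAt h (h' x) x)
    (hh' : ∀ x ∈ Icc a b, HasDerivAt h' (h'' x) x) (h0 : ∀ x ∈ Icc a b, h' x ≠ 0)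
    (hq : ∀ x ∈ Icc a b, HasDerivAt (fun x => h'' x / h' x ^ 3) (q' x) x)
    (hq' : ∀ x ∈ Icc a b, q' x ≤ 0) :
    ∫ x in a..b, σ * cos (h x) ≤ phaseBoundary σ h h' h'' b - phaseBoundary σ h h' h'' a := by
  have hderiv : ∀ x ∈ Icc a b, HasDerivAt (phaseBoundary σ h h' h'')
      (σ * cos (h x) - (1 + σ * cos (h x)) * q' x) x := fun x hx => by
    refine ((((hh x hx).sin.const_mul σ).div (hh' x hx) (h0 x hx)).sub
      ((((hh x hx).cos.const_mul σ).const_add 1).mul (hq x hx))).congr_deriv ?_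
    have := h0 x hx
    field_simp
    ring
  have hweight : ∀ x, 0 ≤ 1 + σ * cos (h x) := fun x => by
    have : |σ * cos (h x)| ≤ 1 := by
      rw [abs_mul]
      exact mul_le_one₀ hσ (abs_nonneg _) (abs_cos_le_one _)
    linarith [neg_le_of_abs_le this]
  refine intervalIntegral.integral_le_sub_of_hasDeriv_right_of_le hab
    (fun x hx => (hderiv x hx).continuousAt.continuousWithinAt)
    (fun x hx => (hderiv x (Ioo_subset_Icc_self hx)).hasDerivWithinAt)
    (ContinuousOn.integrableOn_Icc fun x hx =>
      ((hh x hx).cos.continuousAt.const_mul σ).continuousWithinAt) (fun x hx => ?_)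
  linarith [mul_nonpos_of_nonneg_of_nonpos (hweight x) (hq' x (Ioo_subset_Icc_self hx))]

/-- The phase of the integral for `J_ν(ν)`; it has a degenerate critical point at `0`. -/
noncomputable def besselPhase (ν θ : ℝ) : ℝ := ν * (θ - sin θ)

lemma continuous_besselPhase (ν : ℝ) : Continuous (besselPhase ν) := by
  unfold besselPhase
  fun_prop

lemma hasDerivAt_besselPhase (ν θ : ℝ) :
    HasDerivAt (besselPhase ν) (ν * (1 - cos θ)) θ :=
  ((hasDerivAt_id θ).sub (hasDerivAt_sin θ)).const_mul ν

lemma besselJ_self (n : ℤ) : besselJ n n = (1 / π) * ∫ θ in (0:ℝ)..π, cos (besselPhase n θ) := by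
  simp only [besselJ, besselPhase]
  congr! 3 with θ
  rw [← cos_neg]
  ring_nf

lemma one_sub_cos_pos {θ : ℝ} (h0 : 0 < θ) (hπ : θ ≤ π) : 0 < 1 - cos θ := by
  have hlt := strictAntiOn_cos ⟨le_rfl, pi_pos.le⟩ ⟨h0.le, hπ⟩ h0
  rw [cos_zero] at hlt
  linarith

lemma hasDerivAt_besselPhase_ratio {ν θ : ℝ} (hν : ν ≠ 0) (hθ : 1 - cos θ ≠ 0) :
    HasDerivAt (fun θ => ν * sin θ / (ν * (1 - cos θ)) ^ 3)
      (-(2 * cos θ + 3) / (ν ^ 2 * (1 - cos θ) ^ 3)) θ := by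
  have hden : HasDerivAt (fun θ => ν * (1 - cos θ)) (ν * sin θ) θ :=
    (((hasDerivAt_cos θ).const_sub 1).const_mul ν).congr_deriv (by ring)
  refine (((hasDerivAt_sin θ).const_mul ν).div (hden.pow 3)
    (pow_ne_zero 3 (mul_ne_zero hν hθ))).congr_deriv ?_
  simp only [Pi.pow_apply]
  field_simp
  push_cast
  linear_combination (-3 * ν ^ 2 * (1 - cos θ) ^ 2) * sin_sq_add_cos_sq θ

lemma integral_mul_cos_besselPhase_tail_le {n : ℤ} (hn : n ≠ 0) {b σ : ℝ} (hb : 0 < b)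
    (hπ : b ≤ π) (hσ : |σ| ≤ 1) :
    ∫ θ in b..π, σ * cos (besselPhase n θ) ≤
      (1 + σ * cos (besselPhase n b)) * (n * sin b / (n * (1 - cos b)) ^ 3) -
        σ * sin (besselPhase n b) / (n * (1 - cos b)) := by
  have hn' : (n : ℝ) ≠ 0 := Int.cast_ne_zero.2 hn
  have hpos : ∀ θ ∈ Icc b π, 0 < 1 - cos θ := fun θ hθ =>
    one_sub_cos_pos (hb.trans_le hθ.1) hθ.2
  have hle := integral_mul_cos_le_phaseBoundary (h := besselPhase n) (h'' := fun θ => n * sin θ)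
    hπ hσ (fun θ _ => hasDerivAt_besselPhase n θ)
    (fun θ _ => (((hasDerivAt_cos θ).const_sub 1).const_mul (n : ℝ)).congr_deriv (by ring))
    (fun θ hθ => mul_ne_zero hn' (hpos θ hθ).ne')
    (fun θ hθ => hasDerivAt_besselPhase_ratio hn' (hpos θ hθ).ne')
    (fun θ hθ => div_nonpos_of_nonpos_of_nonneg (by linarith [neg_one_le_cos θ])
      (mul_nonneg (sq_nonneg _) (pow_nonneg (hpos θ hθ).le 3)))
  have hend : sin (besselPhase n π) = 0 := by
    rw [besselPhase, sin_pi, sub_zero, sin_int_mul_pi]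
  simp only [phaseBoundary, hend, sin_pi, mul_zero, zero_div, sub_zero] at hle
  linarith

/- The integral is cut at `b` with `n * b ^ 3 = 2.25 ^ 3`. There the phase, about `n * b ^ 3 / 6`,
is slightly beyond `π / 2`, so the boundary term of the first integration by parts is close to its
largest size and offsets much of the integral over `[0, b]`. For `n ≥ 2` this choice gives
`b ^ 2 ≤ 3.21`. -/
section TurningPoint

variable {ν θ : ℝ}

lemma besselPhase_le (hν : 0 ≤ ν) (hθ : 0 ≤ θ) : besselPhase ν θ ≤ ν * θ ^ 3 / 6 := by
  have := mul_le_mul_of_nonneg_left (sin_ge_sub_cube hθ) hν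
  rw [besselPhase]
  linarith

lemma le_besselPhase (hν : 0 ≤ ν) (hθ : 0 ≤ θ) (hθ2 : θ ^ 2 ≤ 3.21) :
    0.1399 * ν * θ ^ 3 ≤ besselPhase ν θ := by
  have hsin := mul_le_mul_of_nonneg_left (sin_le_quintic hθ) hν
  have hquintic : 0 ≤ ν * θ ^ 3 * (3.21 - θ ^ 2) :=
    mul_nonneg (by positivity) (sub_nonneg.2 hθ2)
  have hcubic : 0 ≤ ν * θ ^ 3 := by positivity
  rw [besselPhase]
  linarith

lemma le_one_sub_cos (hθ : 0 ≤ θ) : θ ^ 2 / 2 * (1 - θ ^ 2 / 12) ≤ 1 - cos θ := by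
  linarith [cos_le_quartic hθ]

lemma sin_div_cube_le (hθ : 0 < θ) (hθ2 : θ ^ 2 ≤ 3.21) :
    sin θ / (1 - cos θ) ^ 3 ≤ 11.36 / θ ^ 5 := by
  have hfactor : 0 < 1 - θ ^ 2 / 12 := by linarith
  have hpoly : 1 - θ ^ 2 / 6 + θ ^ 4 / 120 ≤ 1.42 * (1 - θ ^ 2 / 12) ^ 3 := by
    have hgap := sub_nonneg.2 hθ2
    linarith [mul_nonneg hgap (sq_nonneg (θ ^ 2)), mul_nonneg hgap hgap]
  calc sin θ / (1 - cos θ) ^ 3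
      ≤ θ * (1.42 * (1 - θ ^ 2 / 12) ^ 3) / (θ ^ 2 / 2 * (1 - θ ^ 2 / 12)) ^ 3 := by
        gcongr
        · linarith [sin_le_quintic hθ.le, mul_le_mul_of_nonneg_left hpoly hθ.le]
        · exact le_one_sub_cos hθ.le
    _ = 11.36 / θ ^ 5 := by
        have : 12 - θ ^ 2 ≠ 0 := by linarith
        field_simp
        norm_num

lemma mul_one_sub_cos_mem_Icc (hν : 0 < ν) (hθ : 0 < θ) (hθ2 : θ ^ 2 ≤ 3.21)
    (hνθ : ν * θ ^ 3 = 2.25 ^ 3) : ν * (1 - cos θ) ∈ Icc (4.17 / θ) (5.7 / θ) := by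
  constructor
  · rw [div_le_iff₀ hθ]
    calc 4.17 ≤ ν * θ ^ 3 / 2 * (1 - θ ^ 2 / 12) := by rw [hνθ]; linarith
      _ = ν * (θ ^ 2 / 2 * (1 - θ ^ 2 / 12)) * θ := by ring
      _ ≤ ν * (1 - cos θ) * θ := by
        gcongr
        exact le_one_sub_cos hθ.le
  · rw [le_div_iff₀ hθ]
    calc ν * (1 - cos θ) * θ ≤ ν * (θ ^ 2 / 2) * θ := by
          gcongr
          linarith [one_sub_sq_div_two_le_cos (x := θ)]
      _ = ν * θ ^ 3 / 2 := by ring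
      _ ≤ 5.7 := by rw [hνθ]; norm_num

lemma besselPhase_ratio_le (hν : 0 < ν) (hθ : 0 < θ) (hθ2 : θ ^ 2 ≤ 3.21)
    (hνθ : ν * θ ^ 3 = 2.25 ^ 3) : ν * sin θ / (ν * (1 - cos θ)) ^ 3 ≤ 0.088 * θ :=
  calc ν * sin θ / (ν * (1 - cos θ)) ^ 3 = sin θ / (1 - cos θ) ^ 3 / ν ^ 2 := by field_simp
    _ ≤ 11.36 / θ ^ 5 / ν ^ 2 :=
      div_le_div_of_nonneg_right (sin_div_cube_le hθ hθ2) (sq_nonneg ν)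
    _ = 11.36 / (ν * θ ^ 3) ^ 2 * θ := by field_simp
    _ ≤ 0.088 * θ := by
      rw [hνθ]
      gcongr
      norm_num

lemma besselPhase_mem_Icc (hν : 0 < ν) (hθ : 0 < θ) (hθ2 : θ ^ 2 ≤ 3.21)
    (hνθ : ν * θ ^ 3 = 2.25 ^ 3) : besselPhase ν θ ∈ Icc 1.593 1.9 := by
  constructor
  · linarith [le_besselPhase hν.le hθ.le hθ2]
  · linarith [besselPhase_le hν.le hθ.le]

lemma besselPhase_mem_Icc_of_le {b : ℝ} (hν : 0 < ν) (hνb : ν * b ^ 3 = 2.25 ^ 3)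
    (hθ : θ ∈ Icc 0 b) : besselPhase ν θ ∈ Icc 0 1.9 := by
  constructor
  · exact mul_nonneg hν.le (sub_nonneg.2 (sin_le hθ.1))
  · have := mul_le_mul_of_nonneg_left (pow_le_pow_left₀ hθ.1 hθ.2 3) hν.le
    linarith [besselPhase_le hν.le hθ.1]

lemma integral_cos_besselPhase_le {b : ℝ} (hν : 0 < ν) (hb : 0 < b) (hb2 : b ^ 2 ≤ 3.21)
    (hνb : ν * b ^ 3 = 2.25 ^ 3) :
    ∫ θ in (0:ℝ)..b, cos (besselPhase ν θ) ≤ 0.8395 * b := by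
  have hle := integral_cos_le_of_cubic_le hb.le (by positivity : 0 ≤ 0.1399 * ν)
    (continuous_besselPhase ν)
    (fun θ hθ => le_besselPhase hν.le hθ.1 ((pow_le_pow_left₀ hθ.1 hθ.2 2).trans hb2))
    (fun θ hθ => by linarith [(besselPhase_mem_Icc_of_le hν hνb hθ).2, pi_gt_three])
  calc ∫ θ in (0:ℝ)..b, cos (besselPhase ν θ)
      ≤ b - (0.1399 * ν) ^ 2 * b ^ 7 / 14 + (0.1399 * ν) ^ 4 * b ^ 13 / 312 := hle
    _ = (1 - 0.1399 ^ 2 * (ν * b ^ 3) ^ 2 / 14 + 0.1399 ^ 4 * (ν * b ^ 3) ^ 4 / 312) * b := by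
      ring
    _ ≤ 0.8395 * b := by
      rw [hνb]
      gcongr
      norm_num

lemma le_cos_of_mem_Icc {x : ℝ} (hx : x ∈ Icc 0 1.9) : -0.33 ≤ cos x := by
  rw [← sin_pi_div_two_sub]
  rcases le_total x (π / 2) with h | h
  · linarith [sin_nonneg_of_nonneg_of_le_pi (sub_nonneg.2 h) (by linarith [pi_pos, hx.1])]
  · linarith [le_sin (sub_nonpos.2 h), pi_gt_d2, hx.2]

lemma le_sin_of_mem_Icc {x : ℝ} (hx : x ∈ Icc 1.593 1.9) : 0.945 ≤ sin x := by
  rw [← cos_sub_pi_div_two]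
  have hsq : (x - π / 2) ^ 2 ≤ 0.33 ^ 2 :=
    sq_le_sq' (by linarith [hx.1, pi_lt_d2]) (by linarith [hx.2, pi_gt_d2])
  linarith [one_sub_sq_div_two_le_cos (x := x - π / 2)]

lemma le_integral_cos_besselPhase {b : ℝ} (hν : 0 < ν) (hb : 0 < b)
    (hνb : ν * b ^ 3 = 2.25 ^ 3) :
    -0.33 * b ≤ ∫ θ in (0:ℝ)..b, cos (besselPhase ν θ) := by
  have hmono := intervalIntegral.integral_mono_on (f := fun _ => (-0.33 : ℝ)) (μ := volume) hb.le
    intervalIntegrable_const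
    ((continuous_cos.comp (continuous_besselPhase ν)).intervalIntegrable 0 b) (fun θ hθ =>
      le_cos_of_mem_Icc (besselPhase_mem_Icc_of_le hν hνb hθ))
  simpa [mul_comm] using hmono

lemma sin_besselPhase_div_mem_Icc (hν : 0 < ν) (hθ : 0 < θ) (hθ2 : θ ^ 2 ≤ 3.21)
    (hνθ : ν * θ ^ 3 = 2.25 ^ 3) :
    sin (besselPhase ν θ) / (ν * (1 - cos θ)) ∈ Icc (0.165 * θ) (0.24 * θ) := by
  obtain ⟨hlower, hupper⟩ := mul_one_sub_cos_mem_Icc hν hθ hθ2 hνθ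
  have hsin := le_sin_of_mem_Icc (besselPhase_mem_Icc hν hθ hθ2 hνθ)
  have hpos : 0 < ν * (1 - cos θ) := (by positivity : 0 < 4.17 / θ).trans_le hlower
  constructor
  · rw [le_div_iff₀ hpos]
    calc 0.165 * θ * (ν * (1 - cos θ)) ≤ 0.165 * θ * (5.7 / θ) := by gcongr
      _ ≤ sin (besselPhase ν θ) := by
        field_simp
        linarith
  · rw [div_le_iff₀ hpos]
    calc sin (besselPhase ν θ) ≤ 0.24 * θ * (4.17 / θ) := by
          field_simp
          linarith [sin_le_one (besselPhase ν θ)]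
      _ ≤ 0.24 * θ * (ν * (1 - cos θ)) := by gcongr

end TurningPoint

lemma integral_cos_besselPhase_tail_mem_Icc {n : ℤ} {b : ℝ} (hn : 0 < n) (hb : 0 < b)
    (hb2 : b ^ 2 ≤ 3.21) (hnb : n * b ^ 3 = 2.25 ^ 3) :
    ∫ θ in b..π, cos (besselPhase n θ) ∈ Icc (-0.416 * b) (-0.077 * b) := by
  have hν : (0 : ℝ) < n := Int.cast_pos.2 hn
  have hbπ : b ≤ π :=
    (abs_le_of_sq_le_sq' (hb2.trans (by norm_num : (3.21 : ℝ) ≤ 3 ^ 2)) (by norm_num)).2.trans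
      pi_gt_three.le
  obtain ⟨hphase, hphase'⟩ := besselPhase_mem_Icc hν hb hb2 hnb
  obtain ⟨hsin, hsin'⟩ := sin_besselPhase_div_mem_Icc hν hb hb2 hnb
  have hcos : cos (besselPhase n b) ≤ 0 :=
    cos_nonpos_of_pi_div_two_le_of_le (by linarith [pi_lt_d2]) (by linarith [pi_gt_three])
  have hratio := besselPhase_ratio_le hν hb hb2 hnb
  have hratio_nonneg : 0 ≤ n * sin b / (n * (1 - cos b)) ^ 3 :=
    div_nonneg (mul_nonneg hν.le (sin_nonneg_of_nonneg_of_le_pi hb.le hbπ))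
      (pow_nonneg (mul_nonneg hν.le (one_sub_cos_pos hb hbπ).le) 3)
  have htail := fun σ => integral_mul_cos_besselPhase_tail_le hn.ne' hb hbπ (σ := σ)
  simp only [intervalIntegral.integral_const_mul, mul_div_assoc] at htail
  simp only [mul_div_assoc] at hratio hratio_nonneg
  constructor
  · have hweight : (1 + -1 * cos (besselPhase n b)) ≤ 2 := by
      linarith [neg_one_le_cos (besselPhase n b)]
    linarith [htail (-1) (by norm_num), mul_le_mul_of_nonneg_right hweight hratio_nonneg]
  · have hweight : 1 + 1 * cos (besselPhase n b) ≤ 1 := by linarith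
    linarith [htail 1 (by norm_num), mul_le_mul_of_nonneg_right hweight hratio_nonneg]

lemma abs_integral_cos_besselPhase_le {n : ℤ} {b : ℝ} (hn : 0 < n) (hb : 0 < b)
    (hb2 : b ^ 2 ≤ 3.21) (hnb : n * b ^ 3 = 2.25 ^ 3) :
    |∫ θ in (0:ℝ)..π, cos (besselPhase n θ)| ≤ 0.764 * b := by
  have hν : (0 : ℝ) < n := Int.cast_pos.2 hn
  have hint : ∀ a c : ℝ, IntervalIntegrable (fun θ => cos (besselPhase n θ)) volume a c :=
    (continuous_cos.comp (continuous_besselPhase n)).intervalIntegrable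
  have hhead := integral_cos_besselPhase_le hν hb hb2 hnb
  have hhead' := le_integral_cos_besselPhase hν hb hnb
  obtain ⟨htail', htail⟩ := integral_cos_besselPhase_tail_mem_Icc hn hb hb2 hnb
  rw [← intervalIntegral.integral_add_adjacent_intervals (hint 0 b) (hint b π), abs_le]
  constructor <;> linarith

lemma abs_besselJ_self_mul_le {n : ℤ} {r : ℝ} (hn : 2 ≤ n) (hr0 : 0 < r) (hr : r ^ 3 = n) :
    |besselJ n n| * r ≤ 0.548 := by
  have hn' : (2 : ℝ) ≤ n := by exact_mod_cast hn
  have hrle : 1.2573 ≤ r :=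
    le_of_pow_le_pow_left₀ three_ne_zero hr0.le (by rw [hr]; linarith)
  have hb2 : (2.25 / r) ^ 2 ≤ 3.21 := by
    rw [div_pow, div_le_iff₀ (by positivity)]
    linarith [pow_le_pow_left₀ (by norm_num) hrle 2]
  have hle := abs_integral_cos_besselPhase_le (by lia : 0 < n) (by positivity : 0 < 2.25 / r) hb2
    (by rw [← hr]; field_simp)
  rw [besselJ_self, abs_mul, abs_of_pos (by positivity)]
  calc 1 / π * |∫ θ in (0:ℝ)..π, cos (besselPhase n θ)| * r
      ≤ 1 / π * (0.764 * (2.25 / r)) * r := by gcongr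
    _ = 1.719 / π := by field_simp; norm_num
    _ ≤ 0.548 := by
      rw [div_le_iff₀ pi_pos]
      linarith [pi_gt_d2]

section Extension

variable {n : ℤ} {t : ℝ}

lemma abs_besselJ_le_abs_besselJ_self (hn : 0 < n) (ht : 0 < t) (htn : t ≤ n) :
    |besselJ n t| ≤ |besselJ n n| := by
  have hn0 : (0 : ℝ) < n := Int.cast_pos.2 hn
  have hlog : log (t / n) ≤ 0 := log_nonpos (by positivity) ((div_le_one hn0).2 htn)
  have hle := (isRecessiveSolution_besselJ hn.ne').monotoneOn_abs
    (fun _ hx => besselPotential_nonneg n hx) hlog self_mem_Iic hlog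
  simpa [exp_log (div_pos ht hn0), mul_div_cancel₀ t hn0.ne'] using hle

lemma rpow_mul_abs_besselJ_le (hn : 0 < n) (htn : n ≤ t) {ω : ℝ} (hω : 0 < ω)
    (hων : ω ^ 3 + ω ^ 2 = (n : ℝ) ^ 2) :
    (t / n) ^ (1 / 3 : ℝ) * |besselJ n t| ≤ |besselJ n n| * exp (1 / 2 + 0.13 / ω) := by
  have hn0 : (0 : ℝ) < n := Int.cast_pos.2 hn
  have hn1 : (1 : ℝ) ≤ n := by exact_mod_cast hn
  have hpos : 0 < t / n := div_pos (hn0.trans_le htn) hn0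
  have hle := (isRecessiveSolution_besselJ hn.ne').exp_mul_abs_le
    (by linarith [one_le_pow₀ hn1 (n := 2)]) hω hων (log_nonneg ((one_le_div hn0).2 htn))
  rw [rpow_def_of_pos hpos, mul_one_div]
  simpa [exp_log hpos, mul_div_cancel₀ t hn0.ne'] using hle

lemma le_rpow_neg_of_rpow_mul_le {x y s : ℝ} (hx : 0 < x) (h : x ^ s * y ≤ 1) : y ≤ x ^ (-s) := by
  rwa [rpow_neg hx.le, ← one_div, le_div_iff₀' (rpow_pos_of_pos hx s)]

lemma abs_besselJ_le_of_turning_point {ω : ℝ} (hn : 0 < n) (ht : 0 < t) (hω : 0 < ω)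
    (hων : ω ^ 3 + ω ^ 2 = (n : ℝ) ^ 2)
    (hJ : |besselJ n n| * (n : ℝ) ^ (1 / 3 : ℝ) * exp (1 / 2 + 0.13 / ω) ≤ 1) :
    |besselJ n t| ≤ min ((n : ℝ) ^ (-(1 / 3) : ℝ)) (t ^ (-(1 / 3) : ℝ)) := by
  have hn0 : (0 : ℝ) < n := Int.cast_pos.2 hn
  rcases le_total t n with h | h
  · rw [min_eq_left (rpow_le_rpow_of_nonpos ht h (by norm_num))]
    refine le_rpow_neg_of_rpow_mul_le hn0 ?_
    calc (n : ℝ) ^ (1 / 3 : ℝ) * |besselJ n t| ≤ |besselJ n n| * (n : ℝ) ^ (1 / 3 : ℝ) := by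
          rw [mul_comm]
          exact mul_le_mul_of_nonneg_right (abs_besselJ_le_abs_besselJ_self hn ht h)
            (by positivity)
      _ ≤ |besselJ n n| * (n : ℝ) ^ (1 / 3 : ℝ) * exp (1 / 2 + 0.13 / ω) :=
        le_mul_of_one_le_right (by positivity) (one_le_exp (by positivity))
      _ ≤ 1 := hJ
  · rw [min_eq_right (rpow_le_rpow_of_nonpos hn0 h (by norm_num))]
    refine le_rpow_neg_of_rpow_mul_le ht ?_
    calc t ^ (1 / 3 : ℝ) * |besselJ n t|
        = (n : ℝ) ^ (1 / 3 : ℝ) * ((t / n) ^ (1 / 3 : ℝ) * |besselJ n t|) := by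
          rw [← mul_assoc, ← mul_rpow hn0.le (by positivity), mul_div_cancel₀ t hn0.ne']
      _ ≤ (n : ℝ) ^ (1 / 3 : ℝ) * (|besselJ n n| * exp (1 / 2 + 0.13 / ω)) :=
          mul_le_mul_of_nonneg_left (rpow_mul_abs_besselJ_le hn h hω hων) (by positivity)
      _ ≤ 1 := by linarith

end Extension

lemma exists_cube_add_sq_eq {ν lo : ℝ} (hlo : 0 ≤ lo) (hle : lo ≤ ν) (h : lo ^ 3 + lo ^ 2 ≤ ν ^ 2) :
    ∃ ω, lo ≤ ω ∧ ω ^ 3 + ω ^ 2 = ν ^ 2 := by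
  obtain ⟨ω, hω, heq⟩ := intermediate_value_Icc (f := fun x : ℝ => x ^ 3 + x ^ 2) hle
    (by fun_prop) ⟨h, le_add_of_nonneg_left (pow_nonneg (hlo.trans hle) 3)⟩
  exact ⟨ω, hω.1, heq⟩

lemma abs_besselJ_one_le_min {t : ℝ} (ht : 0 < t) :
    |besselJ 1 t| ≤ min (((1 : ℤ) : ℝ) ^ (-(1 / 3) : ℝ)) (t ^ (-(1 / 3) : ℝ)) := by
  obtain ⟨ω, hω, hων⟩ := exists_cube_add_sq_eq (ν := 1) (lo := 0.75) (by norm_num) (by norm_num)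
    (by norm_num)
  refine abs_besselJ_le_of_turning_point one_pos ht (ω := ω) (by linarith) (by simpa using hων) ?_
  have hexponent : 1 / 2 + 0.13 / ω ≤ log 2 := by
    have : 0.13 / ω ≤ 0.13 / 0.75 := by gcongr
    linarith [log_two_gt_d9]
  have hexp : exp (1 / 2 + 0.13 / ω) ≤ 2 := (le_log_iff_exp_le two_pos).1 hexponent
  have hJ : |besselJ 1 1| ≤ 1 / 2 := by simpa using abs_besselJ_one_le 1
  have := mul_le_mul hJ hexp (exp_pos _).le (by norm_num)
  simpa using this

lemma abs_besselJ_le_min_of_two_le {n : ℤ} (hn : 2 ≤ n) {t : ℝ} (ht : 0 < t) :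
    |besselJ n t| ≤ min ((n : ℝ) ^ (-(1 / 3) : ℝ)) (t ^ (-(1 / 3) : ℝ)) := by
  have hn2 : (2 : ℝ) ≤ n := by exact_mod_cast hn
  obtain ⟨ω, hω, hων⟩ := exists_cube_add_sq_eq (ν := n) (lo := 1.31) (by norm_num) (by linarith)
    (by linarith [pow_le_pow_left₀ two_pos.le hn2 2])
  refine abs_besselJ_le_of_turning_point (by lia) ht (ω := ω) (by linarith) hων ?_
  have hexp : exp (1 / 2 + 0.13 / ω) ≤ 1.8225 := by
    have hexponent : 1 / 2 + 0.13 / ω ≤ 3 / 5 := by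
      have : 0.13 / ω ≤ 0.13 / 1.31 := by gcongr
      linarith
    refine (exp_le_exp.2 hexponent).trans
      (le_of_pow_le_pow_left₀ (by norm_num : 5 ≠ 0) (by norm_num) ?_)
    calc exp (3 / 5) ^ 5 = exp 1 ^ 3 := by rw [← exp_nat_mul, ← exp_nat_mul]; norm_num
      _ ≤ 2.7182818286 ^ 3 := by gcongr; exact exp_one_lt_d9.le
      _ ≤ 1.8225 ^ 5 := by norm_num
  have hcube : ((n : ℝ) ^ (1 / 3 : ℝ)) ^ 3 = n := by
    rw [← rpow_mul_natCast (by linarith)]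
    norm_num
  have hJ := abs_besselJ_self_mul_le hn (by positivity) hcube
  calc |besselJ n n| * (n : ℝ) ^ (1 / 3 : ℝ) * exp (1 / 2 + 0.13 / ω) ≤ 0.548 * 1.8225 :=
        mul_le_mul hJ hexp (exp_pos _).le (by norm_num)
    _ ≤ 1 := by norm_num

end LandauBessel

theorem stmt14 (n : ℤ) (t : ℝ) (hn : n ≠ 0) (ht : t ≠ 0) :
    |besselJ n t| ≤ min (|(n : ℝ)| ^ (-(1/3) : ℝ)) (|t| ^ (-(1/3) : ℝ)) := by
  rw [← LandauBessel.abs_besselJ_abs, ← Int.cast_abs]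
  rcases (Int.one_le_abs hn).eq_or_lt with h | h
  · rw [← h]
    exact LandauBessel.abs_besselJ_one_le_min (abs_pos.2 ht)
  · exact LandauBessel.abs_besselJ_le_min_of_two_le h (abs_pos.2 ht)
end
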